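/- For every positive integer n with n ≡ 2 (mod 5), one has N̄(0,5,n) = N̄(2,5,n). -/

import Mathlib

/-- An overpartition of `n`: a partition of `n` together with a chosen subset of its
distinct part sizes (the overlined parts). -/
def Overpartition (n : ℕ) : Type :=
  {P : n.Partition × Finset ℕ // P.2 ⊆ P.1.parts.toFinset}

/-- The Dyson rank of an overpartition: largest part minus number of parts. -/
def Overpartition.rank {n : ℕ} (P : Overpartition n) : ℤ :=
  (P.1.1.parts.sup : ℤ) - (P.1.1.parts.card : ℤ)

/-- `nbarRank m n` is the number of overpartitions of `n` with rank `m`. -/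
noncomputable def nbarRank (m : ℤ) (n : ℕ) : ℕ :=
  Nat.card {P : Overpartition n // P.rank = m}

/-- `nbar a c n` is the number of overpartitions of `n` with rank congruent to `a` mod `c`. -/
noncomputable def nbar (a : ℤ) (c : ℕ) (n : ℕ) : ℕ :=
  Nat.card {P : Overpartition n // P.rank ≡ a [ZMOD (c : ℤ)]}

/-- `pbar n` is the number of overpartitions of `n`. -/
noncomputable def pbar (n : ℕ) : ℕ := Nat.card (Overpartition n)


namespace OP

def wt {n : ℕ} (P : n.Partition) : ℕ := 2 ^ P.parts.toFinset.card

def W (L k n : ℕ) : ℕ :=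
  ∑ P : n.Partition with P.parts.sup ≤ L ∧ P.parts.card ≤ k, wt P

lemma nbar_eq (a : ℤ) (c n : ℕ) : nbar a c n =
    ∑ P : n.Partition with ((P.parts.sup : ℤ) - (P.parts.card : ℤ)) ≡ a [ZMOD (c : ℤ)], wt P := by
  classical
  unfold nbar
  let e : {P : Overpartition n // P.rank ≡ a [ZMOD (c : ℤ)]} ≃
      (Σ P : {P : n.Partition // ((P.parts.sup : ℤ) - (P.parts.card : ℤ)) ≡ a [ZMOD (c : ℤ)]},
        {S : Finset ℕ // S ∈ P.1.parts.toFinset.powerset}) :=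
    { toFun := fun x => ⟨⟨x.1.1.1, x.2⟩, ⟨x.1.1.2, Finset.mem_powerset.2 x.1.2⟩⟩
      invFun := fun y => ⟨⟨(y.1.1, y.2.1), Finset.mem_powerset.1 y.2.2⟩, y.1.2⟩
      left_inv := fun x => rfl
      right_inv := fun y => rfl }
  rw [Nat.card_congr e, Nat.card_sigma]
  rw [Finset.sum_subtype (p := fun P : n.Partition => ((P.parts.sup : ℤ) - (P.parts.card : ℤ)) ≡ a [ZMOD (c : ℤ)])]
  · apply Finset.sum_congr rfl
    intro P _
    rw [Nat.card_eq_fintype_card, Fintype.card_coe, Finset.card_powerset]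
    rfl
  · intro x
    simp

lemma sup_le_n {n : ℕ} (P : n.Partition) : P.parts.sup ≤ n := by
  rw [Multiset.sup_le]
  intro b hb
  exact P.le_of_mem_parts hb

lemma card_le_n {n : ℕ} (P : n.Partition) : P.parts.card ≤ n := by
  have h := P.parts_sum
  have : P.parts.card • 1 ≤ P.parts.sum := Multiset.card_nsmul_le_sum (fun x hx => P.parts_pos hx)
  simp at this
  omega

lemma W_zero_left (k n : ℕ) : W 0 k n = if n = 0 then 1 else 0 := by
  unfold W
  split_ifs with h
  · subst h
    rw [Finset.sum_eq_single (default : (0:ℕ).Partition)]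
    · simp [wt]
    · intro b _ hb; exact absurd (Subsingleton.elim _ _) hb
    · intro h; exfalso; apply h
      simp
  · apply Finset.sum_eq_zero
    intro P hP
    exfalso
    simp only [Finset.mem_filter, Finset.mem_univ, true_and] at hP
    have h1 : ∀ x ∈ P.parts, x ≤ 0 := Multiset.sup_le.1 hP.1
    have h2 : P.parts = 0 := by
      apply Multiset.eq_zero_of_forall_notMem
      intro x hx
      have := P.parts_pos hx
      have := h1 x hx
      omega
    have := P.parts_sum
    rw [h2] at this
    simp at this
    omega

lemma W_zero_right (L n : ℕ) : W L 0 n = if n = 0 then 1 else 0 := by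
  unfold W
  split_ifs with h
  · subst h
    rw [Finset.sum_eq_single (default : (0:ℕ).Partition)]
    · simp [wt]
    · intro b _ hb; exact absurd (Subsingleton.elim _ _) hb
    · intro h; exfalso; apply h
      simp
  · apply Finset.sum_eq_zero
    intro P hP
    exfalso
    simp only [Finset.mem_filter, Finset.mem_univ, true_and] at hP
    have h2 : P.parts = 0 := by
      have := hP.2
      simpa using this
    have := P.parts_sum
    rw [h2] at this
    simp at this
    omega

/-- add a part -/
def addPart {n : ℕ} (a : ℕ) (P : n.Partition) : (n + (a + 1)).Partition where
  parts := (a + 1) ::ₘ P.parts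
  parts_pos := by
    intro i hi
    rw [Multiset.mem_cons] at hi
    rcases hi with rfl | hi
    · omega
    · exact P.parts_pos hi
  parts_sum := by
    rw [Multiset.sum_cons, P.parts_sum]; omega

def remPart {n : ℕ} (a : ℕ) (P : (n + (a + 1)).Partition) (h : (a + 1) ∈ P.parts) : n.Partition where
  parts := P.parts.erase (a + 1)
  parts_pos := by
    intro i hi
    exact P.parts_pos (Multiset.mem_of_mem_erase hi)
  parts_sum := by
    have := Multiset.sum_erase h
    have h2 := P.parts_sum
    omega

lemma sup_le_succ_iff {s : Multiset ℕ} {L : ℕ} (h : s.sup ≤ L + 1) : s.sup ≤ L ↔ (L + 1) ∉ s := by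
  constructor
  · intro h1 h2
    have := Multiset.sup_le.1 h1 _ h2
    omega
  · intro h1
    rw [Multiset.sup_le] at h ⊢
    intro b hb
    have := h b hb
    have : b ≠ L + 1 := fun h' => h1 (h' ▸ hb)
    omega

lemma wt_addPart {n : ℕ} (a : ℕ) (P : n.Partition) (h : P.parts.sup ≤ a + 1) :
    wt (addPart a P) = wt P + if P.parts.sup ≤ a then wt P else 0 := by
  unfold wt addPart
  simp only [Multiset.toFinset_cons]
  by_cases h1 : (a + 1) ∈ P.parts
  · rw [if_neg (by rw [sup_le_succ_iff h]; simpa using h1)]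
    rw [Finset.insert_eq_of_mem (by simpa using h1)]
    simp
  · rw [if_pos (by rw [sup_le_succ_iff h]; simpa using h1)]
    rw [Finset.card_insert_of_notMem (by simpa using h1)]
    rw [pow_succ]; ring

lemma W_succ_split (L k n : ℕ) : W (L+1) k n = W L k n +
    ∑ P : n.Partition with (P.parts.sup = L + 1 ∧ P.parts.card ≤ k), wt P := by
  classical
  unfold W
  rw [← Finset.sum_union]
  · apply Finset.sum_congr _ (fun _ _ => rfl)
    ext P
    simp only [Finset.mem_filter, Finset.mem_univ, true_and, Finset.mem_union]
    omega
  · rw [Finset.disjoint_filter]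
    intro P _ h1 h2
    omega

lemma sup_eq_iff {s : Multiset ℕ} {L : ℕ} : s.sup = L + 1 ↔ s.sup ≤ L + 1 ∧ (L + 1) ∈ s := by
  constructor
  · intro h
    refine ⟨h.le, ?_⟩
    by_contra h1
    have := (sup_le_succ_iff h.le).2 h1
    omega
  · rintro ⟨h1, h2⟩
    exact le_antisymm h1 (Multiset.le_sup h2)

lemma sum_sup_eq (L k n : ℕ) :
    ∑ P : (n + (L + 1)).Partition with (P.parts.sup = L + 1 ∧ P.parts.card ≤ k + 1), wt P
      = W (L + 1) k n + W L k n := by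
  classical
  have h1 : W (L + 1) k n + W L k n = ∑ P : n.Partition with (P.parts.sup ≤ L + 1 ∧ P.parts.card ≤ k),
      wt (addPart L P) := by
    have : W L k n = ∑ P : n.Partition with (P.parts.sup ≤ L + 1 ∧ P.parts.card ≤ k),
        if P.parts.sup ≤ L then wt P else 0 := by
      unfold W
      rw [← Finset.sum_filter, Finset.filter_filter]
      apply Finset.sum_congr _ (fun _ _ => rfl)
      ext P
      simp only [Finset.mem_filter, Finset.mem_univ, true_and]
      omega
    rw [this]
    unfold W
    rw [← Finset.sum_add_distrib]
    apply Finset.sum_congr rfl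
    intro P hP
    simp only [Finset.mem_filter, Finset.mem_univ, true_and] at hP
    rw [wt_addPart _ _ hP.1]
  rw [h1]
  symm
  refine Finset.sum_bij (fun P _ => addPart L P) ?_ ?_ ?_ (fun _ _ => rfl)
  · intro P hP
    simp only [Finset.mem_filter, Finset.mem_univ, true_and] at hP ⊢
    rw [sup_eq_iff]
    simp [addPart, hP.1, hP.2]
  · intro P _ Q _ h
    have : (addPart L P).parts = (addPart L Q).parts := by rw [h]
    simp only [addPart, Multiset.cons_inj_right] at this
    exact Nat.Partition.ext this
  · intro P hP
    simp only [Finset.mem_filter, Finset.mem_univ, true_and] at hP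
    rw [sup_eq_iff] at hP
    obtain ⟨⟨h1, h2⟩, h3⟩ := hP
    refine ⟨remPart L P h2, ?_, ?_⟩
    · simp only [Finset.mem_filter, Finset.mem_univ, true_and, remPart]
      constructor
      · exact le_trans (Multiset.sup_mono (Multiset.erase_subset _ _)) h1
      · rw [Multiset.card_erase_of_mem h2, Nat.pred_eq_sub_one]
        omega
    · apply Nat.Partition.ext
      simp [addPart, remPart, Multiset.cons_erase h2]

lemma W_rec (L k n : ℕ) : W (L+1) (k+1) (n + (L + 1)) =
    W L (k+1) (n + (L + 1)) + (W (L + 1) k n + W L k n) := by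
  rw [W_succ_split, sum_sup_eq]

lemma W_rec_lt (L k n : ℕ) (h : n < L + 1) : W (L+1) k n = W L k n := by
  rw [W_succ_split]
  rw [Finset.sum_eq_zero, add_zero]
  intro P hP
  simp only [Finset.mem_filter, Finset.mem_univ, true_and] at hP
  have := sup_le_n P
  omega

open PowerSeries in
/-- generating function of overpartitions in a box -/
noncomputable def D : ℕ → ℕ → PowerSeries ℤ
  | 0, _ => 1
  | _ + 1, 0 => 1
  | L + 1, k + 1 => D L (k + 1) + X ^ (L + 1) * (D (L + 1) k + D L k)

lemma D_zero_left (k : ℕ) : D 0 k = 1 := by rw [D]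
lemma D_zero_right (L : ℕ) : D L 0 = 1 := by cases L <;> rw [D]

lemma coeff_D (L k n : ℕ) : PowerSeries.coeff n (D L k) = (W L k n : ℤ) := by
  induction L generalizing k n with
  | zero => rw [D_zero_left, W_zero_left, PowerSeries.coeff_one]; split_ifs <;> simp
  | succ L ihL =>
    induction k generalizing n with
    | zero => rw [D_zero_right, W_zero_right, PowerSeries.coeff_one]; split_ifs <;> simp
    | succ k ihk =>
      rw [D, map_add, ihL, PowerSeries.coeff_X_pow_mul', map_add, ihk, ihL]
      split_ifs with h
      · obtain ⟨m, rfl⟩ := Nat.exists_eq_add_of_le' h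
        rw [W_rec]
        simp
      · rw [W_rec_lt _ _ _ (by omega)]
        simp

open PowerSeries in
lemma D_succ (L k : ℕ) : D (L+1) (k+1) = D L (k + 1) + X ^ (L + 1) * (D (L + 1) k + D L k) := by
  rw [D]

open PowerSeries in
lemma D_rec2 (L k : ℕ) : D (L+1) (k+1) = D (L+1) k + X ^ (k + 1) * (D L (k + 1) + D L k) := by
  induction L generalizing k with
  | zero =>
    induction k with
    | zero => rw [D_succ]; simp only [D_zero_left, D_zero_right]
    | succ k ih =>
      have h1 := D_succ 0 (k+1)
      have h2 := D_succ 0 k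
      simp only [D_zero_left] at *
      linear_combination h1 - h2 + X * ih
  | succ L ihL =>
    induction k with
    | zero =>
      have h1 := D_succ (L+1) 0
      have h2 := ihL 0
      have h3 := D_succ L 0
      simp only [D_zero_right] at *
      linear_combination h1 + h2 - X * h3
    | succ k ih =>
      have h1 := D_succ (L+1) (k+1)
      have h2 := D_succ (L+1) k
      have h3 := ihL (k+1)
      have h4 := ihL k
      have h5 := D_succ L (k+1)
      have h6 := D_succ L k
      linear_combination h1 - h2 + h3 + X^(L+2) * ih + X^(L+2) * h4 - X^(k+2) * h5 - X^(k+2)*h6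

lemma D_symm (L k : ℕ) : D L k = D k L := by
  induction L generalizing k with
  | zero => rw [D_zero_left, D_zero_right]
  | succ L ihL =>
    induction k with
    | zero => rw [D_zero_left, D_zero_right]
    | succ k ihk =>
      rw [D_succ, D_rec2 k L, ihL, ihL, ihk]

lemma W_symm (L k n : ℕ) : W L k n = W k L n := by
  have h1 := coeff_D L k n
  have h2 := coeff_D k L n
  rw [D_symm, h2] at h1
  exact_mod_cast h1.symm

lemma W_rec2 (L k n : ℕ) : W (L+1) (k+1) (n + (k + 1)) =
    W (L+1) k (n + (k + 1)) + (W L (k+1) n + W L k n) := by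
  rw [W_symm, W_rec]
  simp only [W_symm (L+1), W_symm L]

end OP

namespace OP

def pb (n : ℕ) : ℕ := ∑ P : n.Partition, wt P
def Nge (m n : ℕ) : ℕ := ∑ P : n.Partition with P.parts.card + m ≤ P.parts.sup, wt P
def Nneg (m n : ℕ) : ℕ := ∑ P : n.Partition with P.parts.sup + m ≤ P.parts.card, wt P
def Nlt (m n : ℕ) : ℕ := ∑ P : n.Partition with ¬ (P.parts.card + m ≤ P.parts.sup), wt P
def ee (j n : ℕ) : ℕ := ∑ k ∈ Finset.range (n + 1), W (k + j) k (n - k)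

lemma Nge_add_Nlt (m n : ℕ) : Nge m n + Nlt m n = pb n :=
  Finset.sum_filter_add_sum_filter_not _ _ _

lemma card_pos {n : ℕ} (P : n.Partition) (hn : 0 < n) : 0 < P.parts.card := by
  rcases Nat.eq_zero_or_pos P.parts.card with h | h
  · rw [Multiset.card_eq_zero] at h
    have := P.parts_sum
    rw [h] at this
    simp at this
    omega
  · exact h

lemma Nge_eq (m n : ℕ) : Nge m (n + m + 1) = ee (m + 1) n + ee m n := by
  classical
  unfold Nge ee
  rw [← Finset.sum_add_distrib]
  rw [← Finset.sum_fiberwise_of_maps_to (g := fun P : (n + m + 1).Partition => P.parts.sup - m - 1)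
    (t := Finset.range (n+1))]
  · apply Finset.sum_congr rfl
    intro k hk
    rw [Finset.mem_range] at hk
    have h := sum_sup_eq (k + m) k (n - k)
    have hh : n - k + (k + m + 1) = n + m + 1 := by omega
    rw [hh] at h
    rw [← add_assoc, ← h, Finset.filter_filter]
    apply Finset.sum_congr _ (fun _ _ => rfl)
    ext P
    have := card_pos P (by omega)
    simp only [Finset.mem_filter, Finset.mem_univ, true_and]
    omega
  · intro P _
    have := sup_le_n P
    rw [Finset.mem_range]
    omega

lemma Nge_zero (m n : ℕ) (h : n ≤ m) (h' : 0 < m) : Nge m n = 0 := by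
  unfold Nge
  apply Finset.sum_eq_zero
  intro P hP
  simp only [Finset.mem_filter, Finset.mem_univ, true_and] at hP
  exfalso
  have := sup_le_n P
  rcases Nat.eq_zero_or_pos n with h0 | h0
  · omega
  · have := card_pos P h0
    omega

lemma W_card_split (L k n : ℕ) : W L (k+1) n = W L k n +
    ∑ P : n.Partition with (P.parts.card = k + 1 ∧ P.parts.sup ≤ L), wt P := by
  classical
  unfold W
  rw [← Finset.sum_union]
  · apply Finset.sum_congr _ (fun _ _ => rfl)
    ext P
    simp only [Finset.mem_filter, Finset.mem_univ, true_and, Finset.mem_union]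
    omega
  · rw [Finset.disjoint_filter]
    intro P _ h1 h2
    omega

lemma sum_card_eq (L k n : ℕ) :
    ∑ P : (n + (k + 1)).Partition with (P.parts.card = k + 1 ∧ P.parts.sup ≤ L + 1), wt P
      = W L (k + 1) n + W L k n := by
  have h1 := W_card_split (L+1) k (n + (k+1))
  have h2 := W_rec2 L k n
  omega

lemma partition_zero_parts (P : (0:ℕ).Partition) : P.parts = 0 := by
  have := card_le_n P
  simpa using this

lemma Nlt_zero (m : ℕ) : Nlt (m + 2) 0 = ee m 0 := by
  unfold Nlt ee
  simp only [zero_add, Finset.range_one, Finset.sum_singleton, le_refl, Nat.sub_zero]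
  unfold W
  apply Finset.sum_congr _ (fun _ _ => rfl)
  ext P
  simp [partition_zero_parts]

lemma Nlt_succ (m n : ℕ) : Nlt (m + 2) (n + 1) = ee m (n + 1) + ee (m+1) n := by
  classical
  unfold Nlt ee
  rw [Finset.sum_range_succ' _ (n+1)]
  rw [W_zero_right, if_neg (by omega), add_zero, ← Finset.sum_add_distrib]
  rw [← Finset.sum_fiberwise_of_maps_to (g := fun P : (n + 1).Partition => P.parts.card - 1)
    (t := Finset.range (n+1))]
  · apply Finset.sum_congr rfl
    intro k hk
    rw [Finset.mem_range] at hk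
    have h := sum_card_eq (k + 1 + m) k (n - k)
    have hh : n - k + (k + 1) = n + 1 := by omega
    rw [hh] at h
    have h3 : n + 1 - (k + 1) = n - k := by omega
    have h4 : k + (m + 1) = k + 1 + m := by omega
    rw [h3, h4, ← h, Finset.filter_filter]
    apply Finset.sum_congr _ (fun _ _ => rfl)
    ext P
    have := card_pos P (by omega)
    simp only [Finset.mem_filter, Finset.mem_univ, true_and]
    omega
  · intro P _
    have := card_le_n P
    rw [Finset.mem_range]
    omega

def Am (m n : ℕ) : ℕ := Nge m n + Nge (m + 1) n

lemma Am_rec (m n : ℕ) : Am m (n + m + 1) + Am (m + 2) n = 2 * pb n := by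
  unfold Am
  have h1 := Nge_eq m n
  have h2 := Nge_add_Nlt (m+2) n
  have h3 := Nge_add_Nlt (m+3) n
  cases n with
  | zero =>
    have h4 := Nlt_zero m
    have h5 := Nlt_zero (m+1)
    have h6 := Nge_zero (m+1) (0 + m + 1) (by omega) (by omega)
    have h7 : m + 1 + 2 = m + 3 := by omega
    have h8 : m + 2 + 1 = m + 3 := by omega
    rw [h7] at h5
    rw [h8]
    omega
  | succ n =>
    have h4 := Nlt_succ m n
    have h5 := Nlt_succ (m+1) n
    have h6 := Nge_eq (m+1) n
    have h9 : n + (m + 1) + 1 = n + 1 + m + 1 := by omega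
    rw [h9] at h6
    have h7 : m + 1 + 2 = m + 3 := by omega
    have h8 : m + 2 + 1 = m + 3 := by omega
    rw [h7] at h5
    rw [h8]
    omega

lemma Am_zero (m n : ℕ) (h : n ≤ m) (h' : 0 < m) : Am m n = 0 := by
  unfold Am
  rw [Nge_zero _ _ h h', Nge_zero _ _ (by omega) (by omega)]

lemma Nge_fib (m n : ℕ) : Nge (m + 1) n + ∑ k ∈ Finset.range (n+1), W (k + m) k n =
    ∑ k ∈ Finset.range (n+1), W (k + m + 1) k n := by
  classical
  simp only [W_succ_split]
  rw [Finset.sum_add_distrib, add_comm]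
  congr 1
  unfold Nge
  rw [← Finset.sum_fiberwise_of_maps_to (g := fun P : n.Partition => P.parts.sup - m - 1)
    (t := Finset.range (n+1))]
  · apply Finset.sum_congr rfl
    intro k hk
    rw [Finset.filter_filter]
    apply Finset.sum_congr _ (fun _ _ => rfl)
    ext P
    simp only [Finset.mem_filter, Finset.mem_univ, true_and]
    omega
  · intro P _
    have := sup_le_n P
    rw [Finset.mem_range]
    omega

lemma Nneg_fib (m n : ℕ) : Nneg (m + 1) n + ∑ k ∈ Finset.range (n+1), W k (k + m) n =
    ∑ k ∈ Finset.range (n+1), W k (k + m + 1) n := by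
  classical
  simp only [W_card_split]
  rw [Finset.sum_add_distrib, add_comm]
  congr 1
  unfold Nneg
  rw [← Finset.sum_fiberwise_of_maps_to (g := fun P : n.Partition => P.parts.card - m - 1)
    (t := Finset.range (n+1))]
  · apply Finset.sum_congr rfl
    intro k hk
    rw [Finset.filter_filter]
    apply Finset.sum_congr _ (fun _ _ => rfl)
    ext P
    simp only [Finset.mem_filter, Finset.mem_univ, true_and]
    omega
  · intro P _
    have := card_le_n P
    rw [Finset.mem_range]
    omega

lemma Nneg_eq (m n : ℕ) : Nneg (m + 1) n = Nge (m + 1) n := by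
  have h1 := Nge_fib m n
  have h2 := Nneg_fib m n
  have h3 : ∑ k ∈ Finset.range (n+1), W k (k + m) n = ∑ k ∈ Finset.range (n+1), W (k + m) k n :=
    Finset.sum_congr rfl (fun k _ => W_symm _ _ _)
  have h4 : ∑ k ∈ Finset.range (n+1), W k (k + m + 1) n = ∑ k ∈ Finset.range (n+1), W (k + m + 1) k n :=
    Finset.sum_congr rfl (fun k _ => W_symm _ _ _)
  omega

lemma Am_zero_eq (n : ℕ) : Am 0 n = pb n := by
  have h1 := Nge_add_Nlt 0 n
  have h2 : Nlt 0 n = Nneg 1 n := by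
    unfold Nlt Nneg
    apply Finset.sum_congr _ (fun _ _ => rfl)
    ext P
    simp only [Finset.mem_filter, Finset.mem_univ, true_and]
    omega
  rw [h2, Nneg_eq] at h1
  unfold Am
  simp only [zero_add] at *
  omega

/-- the coefficient sequence -/
def cc (m : ℕ) : ℤ := match m % 5 with
  | 1 => -2
  | 2 => 1
  | 3 => -1
  | 4 => 2
  | _ => 0

def chi (r : ℤ) : ℤ := (if r ≡ 0 [ZMOD (5:ℕ)] then 1 else 0) - (if r ≡ 2 [ZMOD (5:ℕ)] then 1 else 0)

lemma chi_pos (r n : ℕ) (h : r ≤ n) : chi r = 1 + ∑ m ∈ Finset.range n,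
    (chi (m + 1) - chi m) * (if m + 1 ≤ r then 1 else 0) := by
  induction n generalizing r with
  | zero =>
    have : r = 0 := by omega
    subst this
    simp [chi, Int.ModEq]
  | succ n ih =>
    rw [Finset.sum_range_succ]
    rcases Nat.lt_or_ge n r with h1 | h1
    · have : r = n + 1 := by omega
      subst this
      rw [if_pos le_rfl]
      have h2 := ih n le_rfl
      have h3 : ∑ m ∈ Finset.range n, (chi (m + 1) - chi m) * (if m + 1 ≤ n + 1 then 1 else 0) =
         ∑ m ∈ Finset.range n, (chi (m + 1) - chi m) * (if m + 1 ≤ n then 1 else 0) := by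
        apply Finset.sum_congr rfl
        intro m hm
        rw [Finset.mem_range] at hm
        rw [if_pos (by omega), if_pos (by omega)]
      rw [h3]
      push_cast
      linarith
    · rw [if_neg (by omega), ih r h1]; ring

lemma chi_neg (r n : ℕ) (h : r ≤ n) : chi (-r) = 1 + ∑ m ∈ Finset.range n,
    (chi (-(m + 1)) - chi (-m)) * (if m + 1 ≤ r then 1 else 0) := by
  induction n generalizing r with
  | zero =>
    have : r = 0 := by omega
    subst this
    simp [chi, Int.ModEq]
  | succ n ih =>
    rw [Finset.sum_range_succ]
    rcases Nat.lt_or_ge n r with h1 | h1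
    · have : r = n + 1 := by omega
      subst this
      rw [if_pos le_rfl]
      have h2 := ih n le_rfl
      have h3 : ∑ m ∈ Finset.range n, (chi (-(m + 1)) - chi (-m)) * (if m + 1 ≤ n + 1 then 1 else 0) =
         ∑ m ∈ Finset.range n, (chi (-(m + 1)) - chi (-m)) * (if m + 1 ≤ n then 1 else 0) := by
        apply Finset.sum_congr rfl
        intro m hm
        rw [Finset.mem_range] at hm
        rw [if_pos (by omega), if_pos (by omega)]
      rw [h3]
      push_cast
      push_cast at h2
      linarith
    · rw [if_neg (by omega), ih r h1]; ring

lemma chi_gen (L k n : ℕ) (hL : L ≤ n) (hk : k ≤ n) : chi ((L:ℤ) - k) = 1 +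
    ∑ m ∈ Finset.range n, ((chi (m + 1) - chi m) * (if k + (m + 1) ≤ L then 1 else 0)
     + (chi (-(m + 1)) - chi (-m)) * (if L + (m + 1) ≤ k then 1 else 0)) := by
  rcases Nat.le_total k L with h | h
  · have h1 := chi_pos (L - k) n (by omega)
    rw [Nat.cast_sub h] at h1
    rw [h1]
    congr 1
    apply Finset.sum_congr rfl
    intro m _
    rw [if_neg (show ¬ (L + (m+1) ≤ k) by omega), mul_zero, add_zero]
    congr 1
    apply if_congr _ rfl rfl
    omega
  · have h1 := chi_neg (k - L) n (by omega)
    rw [Nat.cast_sub h, neg_sub] at h1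
    rw [h1]
    congr 1
    apply Finset.sum_congr rfl
    intro m _
    rw [if_neg (show ¬ (k + (m+1) ≤ L) by omega), mul_zero, zero_add]
    congr 1
    apply if_congr _ rfl rfl
    omega

lemma chi_mod (r : ℤ) : chi r = (if r % 5 = 0 then 1 else 0) - (if r % 5 = 2 then 1 else 0) := by
  unfold chi
  congr 1

lemma chi_cc (m : ℕ) : (chi (m + 1) - chi m) + (chi (-(m + 1)) - chi (-m)) = cc (m + 1) + cc m := by
  unfold cc
  simp only [chi_mod]
  have h2 : m % 5 = 0 ∨ m % 5 = 1 ∨ m % 5 = 2 ∨ m % 5 = 3 ∨ m % 5 = 4 := by omega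
  rcases h2 with h | h | h | h | h
  · rw [h, show (m+1) % 5 = 1 by omega, show (m:ℤ) % 5 = 0 by omega,
      show ((m:ℤ) + 1) % 5 = 1 by omega, show (-(m:ℤ)) % 5 = 0 by omega,
      show (-((m:ℤ) + 1)) % 5 = 4 by omega]
    norm_num
  · rw [h, show (m+1) % 5 = 2 by omega, show (m:ℤ) % 5 = 1 by omega,
      show ((m:ℤ) + 1) % 5 = 2 by omega, show (-(m:ℤ)) % 5 = 4 by omega,
      show (-((m:ℤ) + 1)) % 5 = 3 by omega]
    norm_num
  · rw [h, show (m+1) % 5 = 3 by omega, show (m:ℤ) % 5 = 2 by omega,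
      show ((m:ℤ) + 1) % 5 = 3 by omega, show (-(m:ℤ)) % 5 = 3 by omega,
      show (-((m:ℤ) + 1)) % 5 = 2 by omega]
    norm_num
  · rw [h, show (m+1) % 5 = 4 by omega, show (m:ℤ) % 5 = 3 by omega,
      show ((m:ℤ) + 1) % 5 = 4 by omega, show (-(m:ℤ)) % 5 = 2 by omega,
      show (-((m:ℤ) + 1)) % 5 = 1 by omega]
    norm_num
  · rw [h, show (m+1) % 5 = 0 by omega, show (m:ℤ) % 5 = 4 by omega,
      show ((m:ℤ) + 1) % 5 = 0 by omega, show (-(m:ℤ)) % 5 = 1 by omega,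
      show (-((m:ℤ) + 1)) % 5 = 0 by omega]
    norm_num

def Fn (n : ℕ) : ℤ := (pb n : ℤ) + ∑ m ∈ Finset.range (n + 1), cc m * Am m n

lemma nbar_diff (n : ℕ) : (nbar 0 5 n : ℤ) - nbar 2 5 n = Fn n := by
  rw [nbar_eq, nbar_eq]
  have h1 : ((∑ P : n.Partition with ((P.parts.sup : ℤ) - (P.parts.card : ℤ)) ≡ 0 [ZMOD ((5:ℕ) : ℤ)], wt P : ℕ) : ℤ)
      - ((∑ P : n.Partition with ((P.parts.sup : ℤ) - (P.parts.card : ℤ)) ≡ 2 [ZMOD ((5:ℕ) : ℤ)], wt P : ℕ) : ℤ)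
      = ∑ P : n.Partition, chi ((P.parts.sup : ℤ) - (P.parts.card : ℤ)) * wt P := by
    rw [Finset.sum_filter, Finset.sum_filter]
    push_cast
    rw [← Finset.sum_sub_distrib]
    apply Finset.sum_congr rfl
    intro P _
    unfold chi
    push_cast
    split_ifs <;> ring
  rw [h1]
  have h2 : ∀ P : n.Partition, chi ((P.parts.sup : ℤ) - (P.parts.card : ℤ)) * wt P = wt P +
    ∑ m ∈ Finset.range n, ((chi (m + 1) - chi m) * (if P.parts.card + (m + 1) ≤ P.parts.sup then (wt P : ℤ) else 0)
     + (chi (-(m + 1)) - chi (-m)) * (if P.parts.sup + (m + 1) ≤ P.parts.card then (wt P : ℤ) else 0)) := by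
    intro P
    rw [chi_gen _ _ n (sup_le_n P) (card_le_n P), add_mul, one_mul, Finset.sum_mul]
    congr 1
    apply Finset.sum_congr rfl
    intro m _
    split_ifs <;> ring
  rw [Finset.sum_congr rfl (fun P _ => h2 P), Finset.sum_add_distrib, Finset.sum_comm]
  have h3 : ∀ m : ℕ, ∑ P : n.Partition, ((chi (m + 1) - chi m) * (if P.parts.card + (m + 1) ≤ P.parts.sup then (wt P : ℤ) else 0)
     + (chi (-(m + 1)) - chi (-m)) * (if P.parts.sup + (m + 1) ≤ P.parts.card then (wt P : ℤ) else 0))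
      = (cc (m + 1) + cc m) * Nge (m + 1) n := by
    intro m
    rw [Finset.sum_add_distrib, ← Finset.mul_sum, ← Finset.mul_sum, ← chi_cc, add_mul]
    congr 1
    · congr 1
      unfold Nge
      rw [Finset.sum_filter]; push_cast; rfl
    · congr 1
      rw [← Nneg_eq]
      unfold Nneg
      rw [Finset.sum_filter]; push_cast; rfl
  rw [Finset.sum_congr rfl (fun m _ => h3 m)]
  unfold Fn pb
  push_cast
  congr 1
  have h4 : ∀ N : ℕ, ∑ m ∈ Finset.range (N+1), cc m * (Am m n : ℤ) = 
     ∑ m ∈ Finset.range N, (cc (m + 1) + cc m) * (Nge (m + 1) n : ℤ) + cc N * Nge (N + 1) n := by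
    intro N
    induction N with
    | zero => simp [cc]
    | succ N ih =>
      rw [Finset.sum_range_succ, ih, Finset.sum_range_succ]
      unfold Am
      push_cast
      ring
  rw [h4, Nge_zero (n+1) n (by omega) (by omega)]
  simp

end OP

namespace OP
open Filter Topology

lemma summ_J_nat (s w : ℂ) (h0 : s ≠ 0) (hs : ‖s‖ < 1) (hw : w ≠ 0) :
    Summable (fun n : ℕ => s ^ (n ^ 2) * w ^ n) := by
  apply summable_of_ratio_test_tendsto_lt_one (l := 0) (by norm_num)
  · filter_upwards with n
    positivity
  · have h1 : ∀ n : ℕ, ‖s ^ ((n+1) ^ 2) * w ^ (n+1)‖ / ‖s ^ (n ^ 2) * w ^ n‖ = (‖s‖^2)^n * (‖s‖ * ‖w‖) := by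
      intro n
      have : s ^ ((n+1) ^ 2) * w ^ (n+1) = (s ^ (n ^ 2) * w ^ n) * ((s^2)^n * (s * w)) := by ring
      rw [this, norm_mul, mul_div_cancel_left₀]
      · simp [norm_mul, norm_pow]
      · simp [h0, hw]
    simp_rw [h1]
    rw [show (0:ℝ) = 0 * (‖s‖ * ‖w‖) by ring]
    apply Tendsto.mul_const
    apply tendsto_pow_atTop_nhds_zero_of_lt_one (by positivity)
    have := norm_nonneg s
    nlinarith

lemma summ_J (s w : ℂ) (h0 : s ≠ 0) (hs : ‖s‖ < 1) (hw : w ≠ 0) :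
    Summable (fun m : ℤ => s ^ (m ^ 2) * w ^ m) := by
  apply Summable.of_nat_of_neg
  · refine (summ_J_nat s w h0 hs hw).congr ?_
    intro n
    rw [← zpow_natCast, ← zpow_natCast]
    push_cast
    rfl
  · refine (summ_J_nat s w⁻¹ h0 hs (inv_ne_zero hw)).congr ?_
    intro n
    rw [← zpow_natCast, ← zpow_natCast, neg_sq, zpow_neg, inv_zpow]
    push_cast
    rfl

/-- the basic theta series -/
noncomputable def J (s w : ℂ) : ℂ := ∑' m : ℤ, s ^ (m ^ 2) * w ^ m

lemma J_inv (s w : ℂ) : J s w⁻¹ = J s w := by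
  unfold J
  rw [← (Equiv.neg ℤ).tsum_eq]
  apply tsum_congr
  intro m
  simp [inv_zpow]

lemma J_shift (s w : ℂ) (h0 : s ≠ 0) (hw : w ≠ 0) : J s (s ^ 2 * w) = (s * w)⁻¹ * J s w := by
  unfold J
  rw [← tsum_mul_left]
  rw [← (Equiv.addRight (1:ℤ)).tsum_eq (fun m : ℤ => (s * w)⁻¹ * (s ^ (m ^ 2) * w ^ m))]
  apply tsum_congr
  intro m
  simp only [Equiv.coe_addRight]
  rw [show (m + 1)^2 = m^2 + 2 * m + 1 by ring, zpow_add₀ h0, zpow_add₀ h0, zpow_add₀ hw, mul_zpow,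
    ← zpow_natCast, ← zpow_mul]
  field_simp
  simp

lemma J_zero (s : ℂ) (h0 : s ≠ 0) : J s (-s) = 0 := by
  have h1 := J_shift s (-s)⁻¹ h0 (inv_ne_zero (neg_ne_zero.2 h0))
  rw [J_inv] at h1
  have h2 : s ^ 2 * (-s)⁻¹ = -s := by field_simp
  have h3 : (s * (-s)⁻¹)⁻¹ = -1 := by field_simp
  rw [h2, h3] at h1
  linear_combination (1/2) * h1

lemma tsum_split5 (f : ℤ → ℂ) (hf : Summable f) : ∑' n, f n =
    (∑' m, f (5 * m + (-2))) + (∑' m, f (5 * m + (-1))) + (∑' m, f (5 * m + 0)) +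
     (∑' m, f (5 * m + 1)) + (∑' m, f (5 * m + 2)) := by
  have h1 := (Int.divModEquiv 5).symm.tsum_eq f
  rw [← h1]
  have h2 : Summable (fun c => f ((Int.divModEquiv 5).symm c)) :=
    (Int.divModEquiv 5).symm.summable_iff.2 hf
  rw [← (Equiv.prodComm _ _).tsum_eq]
  have h3 : Summable (fun c => f ((Int.divModEquiv 5).symm ((Equiv.prodComm _ _) c))) :=
    (Equiv.prodComm (Fin 5) ℤ).summable_iff.2 h2
  rw [h3.tsum_prod, tsum_fintype, Fin.sum_univ_five]
  have h4 : ∀ (r : ℤ), ∑' m, f (5 * m + r) = ∑' m, f (5 * m + (5 + r)) := by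
    intro r
    rw [← (Equiv.addRight (1:ℤ)).tsum_eq (fun m : ℤ => f (5 * m + r))]
    apply tsum_congr
    intro m
    simp only [Equiv.coe_addRight]
    congr 1; ring
  rw [h4 (-2), h4 (-1)]
  have h5 : ∀ (r : Fin 5), (∑' m, f ((Int.divModEquiv 5).symm ((Equiv.prodComm _ _) (r, m)))) =
     ∑' m, f (5 * m + (r:ℕ)) := by
    intro r
    apply tsum_congr
    intro m
    simp [Int.divModEquiv, mul_comm]
  rw [h5, h5, h5, h5, h5]
  norm_num
  ring

/-- parity splitting of the integer lattice -/
def latFun : (ℤ × ℤ) ⊕ (ℤ × ℤ) → ℤ × ℤ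
  | Sum.inl x => (x.1 + x.2, x.1 - x.2)
  | Sum.inr x => (x.1 + x.2 + 1, x.1 - x.2)

lemma latFun_bij : Function.Bijective latFun := by
  constructor
  · rintro (⟨a, b⟩ | ⟨a, b⟩) (⟨c, d⟩ | ⟨c, d⟩) h <;> simp only [latFun, Prod.mk.injEq] at h
    · have h1 : a = c := by omega
      have h2 : b = d := by omega
      rw [h1, h2]
    · omega
    · omega
    · have h1 : a = c := by omega
      have h2 : b = d := by omega
      rw [h1, h2]
  · rintro ⟨m, n⟩
    obtain ⟨k, hk | hk⟩ := Int.even_or_odd' (m + n)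
    · refine ⟨Sum.inl (k, m - k), ?_⟩
      simp only [latFun, Prod.mk.injEq]; omega
    · refine ⟨Sum.inr (k, m - k - 1), ?_⟩
      simp only [latFun, Prod.mk.injEq]; omega

lemma J_add (s u v : ℂ) (h0 : s ≠ 0) (hs : ‖s‖ < 1) (hu : u ≠ 0) (hv : v ≠ 0) :
    J s (u * v) * J s (u / v) = J (s^2) (u^2) * J (s^2) (v^2) +
      s * u * v * J (s^2) (s^2 * u^2) * J (s^2) (s^2 * v^2) := by
  have hs2 : ‖s ^ 2‖ < 1 := by
    rw [norm_pow]; exact pow_lt_one₀ (norm_nonneg _) hs (by norm_num)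
  have h02 : s ^ 2 ≠ 0 := pow_ne_zero _ h0
  have sq : ∀ (x : ℂ) (k : ℤ), (x ^ 2) ^ k = x ^ (2 * k) := by
    intro x k; rw [zpow_mul]; rfl
  have p1 := (summ_J (s^2) (u^2) h02 hs2 (pow_ne_zero _ hu)).norm
  have p2 := (summ_J (s^2) (v^2) h02 hs2 (pow_ne_zero _ hv)).norm
  have p3 := (summ_J (s^2) (s^2 * u^2) h02 hs2 (mul_ne_zero h02 (pow_ne_zero _ hu))).norm
  have p4 := (summ_J (s^2) (s^2 * v^2) h02 hs2 (mul_ne_zero h02 (pow_ne_zero _ hv))).norm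
  unfold J
  rw [mul_assoc (s * u * v)]
  rw [tsum_mul_tsum_of_summable_norm (summ_J s (u * v) h0 hs (mul_ne_zero hu hv)).norm
    (summ_J s (u / v) h0 hs (div_ne_zero hu hv)).norm]
  rw [tsum_mul_tsum_of_summable_norm p1 p2, tsum_mul_tsum_of_summable_norm p3 p4]
  have q1 := summable_mul_of_summable_norm p1 p2
  have q2 := (summable_mul_of_summable_norm p3 p4).mul_left (s * u * v)
  rw [← (Equiv.ofBijective _ latFun_bij).tsum_eq, ← tsum_mul_left]
  have r1 : ∀ x : ℤ × ℤ, s ^ (latFun (Sum.inl x)).1 ^ 2 * (u * v) ^ (latFun (Sum.inl x)).1 *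
     (s ^ (latFun (Sum.inl x)).2 ^ 2 * (u / v) ^ (latFun (Sum.inl x)).2) =
     (s ^ 2) ^ x.1 ^ 2 * (u ^ 2) ^ x.1 * ((s ^ 2) ^ x.2 ^ 2 * (v ^ 2) ^ x.2) := by
    rintro ⟨i, j⟩
    simp only [latFun, sq]
    rw [mul_zpow, div_zpow, div_eq_mul_inv, ← zpow_neg]
    have e1 : s ^ ((i + j)^2) * s ^ ((i - j)^2) = s ^ (2 * i ^ 2) * s ^ (2 * j ^ 2) := by
      rw [← zpow_add₀ h0, ← zpow_add₀ h0]; congr 1; ring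
    have e2 : u ^ (i + j) * u ^ (i - j) = u ^ (2 * i) := by
      rw [← zpow_add₀ hu]; congr 1; ring
    have e3 : v ^ (i + j) * v ^ (-(i - j)) = v ^ (2 * j) := by
      rw [← zpow_add₀ hv]; congr 1; ring
    rw [← e2, ← e3]
    linear_combination (u ^ (i + j) * u ^ (i - j)) * (v ^ (i + j) * v ^ (-(i - j))) * e1
  have r2 : ∀ x : ℤ × ℤ, s ^ (latFun (Sum.inr x)).1 ^ 2 * (u * v) ^ (latFun (Sum.inr x)).1 *
     (s ^ (latFun (Sum.inr x)).2 ^ 2 * (u / v) ^ (latFun (Sum.inr x)).2) =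
     s * u * v * ((s ^ 2) ^ x.1 ^ 2 * (s ^ 2 * u ^ 2) ^ x.1 * ((s ^ 2) ^ x.2 ^ 2 * (s ^ 2 * v ^ 2) ^ x.2)) := by
    rintro ⟨i, j⟩
    simp only [latFun, mul_zpow, sq]
    rw [div_zpow, div_eq_mul_inv, ← zpow_neg]
    have e1 : s ^ ((i + j + 1)^2) * s ^ ((i - j)^2) = s * (s ^ (2 * i ^ 2) * s ^ (2 * i) * (s ^ (2 * j ^ 2) * s ^ (2 * j))) := by
      rw [← zpow_add₀ h0, ← zpow_add₀ h0, ← zpow_add₀ h0, ← zpow_add₀ h0, ← zpow_one_add₀ h0]; congr 1; ring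
    have e2 : u ^ (i + j + 1) * u ^ (i - j) = u * u ^ (2 * i) := by
      rw [← zpow_add₀ hu, ← zpow_one_add₀ hu]; congr 1; ring
    have e3 : v ^ (i + j + 1) * v ^ (-(i - j)) = v * v ^ (2 * j) := by
      rw [← zpow_add₀ hv, ← zpow_one_add₀ hv]; congr 1; ring
    calc _ = (s ^ ((i + j + 1)^2) * s ^ ((i - j)^2)) * (u ^ (i + j + 1) * u ^ (i - j)) *
        (v ^ (i + j + 1) * v ^ (-(i - j))) := by ring
      _ = _ := by rw [e1, e2, e3]; ring
  rw [Summable.tsum_sum]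
  · congr 1
    · exact tsum_congr r1
    · exact tsum_congr r2
  · exact q1.congr (fun x => (r1 x).symm)
  · exact q2.congr (fun x => (r2 x).symm)

lemma J_split5 (x w : ℂ) (h0 : x ≠ 0) (hs : ‖x‖ < 1) (hw : w ≠ 0) : J x w =
    x ^ 4 * (w⁻¹)^2 * J (x^25) (w^5 * ((x^10)⁻¹)^2) + x * w⁻¹ * J (x^25) (w^5 * (x^10)⁻¹) + J (x^25) (w^5)
    + x * w * J (x^25) (w^5 * x^10) + x^4 * w^2 * J (x^25) (w^5 * (x^10)^2) := by
  have key : ∀ r : ℤ, (∑' m : ℤ, x ^ ((5 * m + r)^2) * w ^ (5 * m + r)) =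
      x ^ (r^2) * w ^ r * J (x^25) (w^5 * (x^10)^r) := by
    intro r
    unfold J
    rw [← tsum_mul_left]
    apply tsum_congr
    intro m
    rw [show (5 * m + r)^2 = 25 * m^2 + 10 * r * m + r^2 by ring, zpow_add₀ h0, zpow_add₀ h0, zpow_add₀ hw, mul_zpow,
      ← zpow_natCast x 25, ← zpow_natCast x 10, ← zpow_natCast w 5, ← zpow_mul, ← zpow_mul, ← zpow_mul, ← zpow_mul]
    push_cast
    ring
  have := tsum_split5 _ (summ_J x w h0 hs hw)
  simp only [key] at this
  unfold J at this ⊢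
  rw [this]
  norm_num [zpow_neg]

end OP

namespace OP
open Filter Topology

lemma pb_zero : pb 0 = 1 := by
  unfold pb
  rw [Finset.sum_eq_single (default : (0:ℕ).Partition)]
  · simp [wt]
  · intro b _ hb; exact absurd (Subsingleton.elim _ _) hb
  · intro h; exact absurd (Finset.mem_univ _) h

lemma pb_le (n : ℕ) : pb n ≤ 2 ^ n := by
  induction n with
  | zero => rw [pb_zero]; norm_num
  | succ n ih =>
    have h := Am_rec 0 n
    rw [Am_zero_eq] at h
    simp only [add_zero] at h
    rw [pow_succ]
    omega

lemma Am_le (m n : ℕ) (hm : 0 < m) : Am m n * 2 ^ m ≤ 2 ^ n := by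
  rcases Nat.lt_or_ge m n with h | h
  · obtain ⟨k, rfl⟩ := Nat.exists_eq_add_of_lt h
    have h1 := Am_rec m k
    rw [show m + k + 1 = k + m + 1 by omega]
    have h2 := pb_le k
    have h3 : Am m (k + m + 1) ≤ 2 * 2 ^ k := by omega
    calc _ ≤ (2 * 2 ^ k) * 2 ^ m := Nat.mul_le_mul_right _ h3
      _ = _ := by ring
  · rw [Am_zero m n h hm]; simp

variable {x : ℂ}

lemma summ_geo (a : ℕ → ℂ) (C : ℝ) (ha : ∀ n, ‖a n‖ ≤ C * 2 ^ n) (hx : ‖x‖ ≤ 1/10) :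
    Summable (fun n => a n * x ^ n) := by
  apply Summable.of_norm_bounded (g := fun n : ℕ => C * (1/5 : ℝ) ^ n)
  · exact (summable_geometric_of_lt_one (by norm_num) (by norm_num)).mul_left _
  · intro n
    rw [norm_mul, norm_pow]
    calc ‖a n‖ * ‖x‖ ^ n ≤ (C * 2 ^ n) * (1/10) ^ n := by
          apply mul_le_mul (ha n) (pow_le_pow_left₀ (norm_nonneg _) hx _) (by positivity)
          exact le_trans (norm_nonneg _) (ha n)
      _ = C * (1/5 : ℝ) ^ n := by
          rw [mul_assoc, ← mul_pow]; norm_num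

lemma norm_tsum_geo (a : ℕ → ℂ) (C : ℝ) (ha : ∀ n, ‖a n‖ ≤ C * 2 ^ n) (hx : ‖x‖ ≤ 1/10) :
    ‖∑' n, a n * x ^ n‖ ≤ C * 2 := by
  have hC : 0 ≤ C := by have := ha 0; simp at this; exact le_trans (norm_nonneg _) this
  calc _ ≤ C * (1 - 1/5 : ℝ)⁻¹ := by
        apply tsum_of_norm_bounded ((hasSum_geometric_of_lt_one (by norm_num) (by norm_num)).mul_left C)
        intro n
        rw [norm_mul, norm_pow]
        calc ‖a n‖ * ‖x‖ ^ n ≤ (C * 2 ^ n) * (1/10) ^ n := by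
              apply mul_le_mul (ha n) (pow_le_pow_left₀ (norm_nonneg _) hx _) (by positivity)
              exact le_trans (norm_nonneg _) (ha n)
          _ = C * (1/5 : ℝ) ^ n := by
              rw [mul_assoc, ← mul_pow]; norm_num
    _ ≤ _ := by norm_num; linarith

noncomputable def Pb (x : ℂ) : ℂ := ∑' n : ℕ, (pb n : ℂ) * x ^ n
noncomputable def Ag (m : ℕ) (x : ℂ) : ℂ := ∑' n : ℕ, (Am m n : ℂ) * x ^ n
noncomputable def fg (m : ℕ) (x : ℂ) : ℂ := ∑' n : ℕ, (-1) ^ n * x ^ ((n + 1) ^ 2 + m * (n + 1))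

lemma pb_norm (n : ℕ) : ‖(pb n : ℂ)‖ ≤ 1 * 2 ^ n := by
  rw [Complex.norm_natCast, one_mul]; exact_mod_cast pb_le n

lemma Am_norm (m n : ℕ) : ‖(Am m n : ℂ)‖ ≤ 1 * 2 ^ n := by
  rw [Complex.norm_natCast, one_mul]
  rcases Nat.eq_zero_or_pos m with rfl | h
  · rw [Am_zero_eq]; exact_mod_cast pb_le n
  · have h1 := Am_le m n h
    have h2 : Am m n ≤ Am m n * 2 ^ m := Nat.le_mul_of_pos_right _ (by positivity)
    exact_mod_cast le_trans h2 h1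

lemma Ag_rec_aux (m : ℕ) (hx : ‖x‖ ≤ 1/10) (c : ℂ)
    (h : ∑ n ∈ Finset.range (m+1), (Am m n : ℂ) * x ^ n = c) :
    Ag m x = c + x ^ (m + 1) * (2 * Pb x - Ag (m+2) x) := by
  unfold Ag Pb
  have s1 := summ_geo (x := x) _ 1 (Am_norm m) hx
  have s2 := summ_geo (x := x) _ 1 (Am_norm (m+2)) hx
  have s3 := summ_geo (x := x) _ 1 (pb_norm) hx
  rw [← s1.sum_add_tsum_nat_add (m+1), h, ← tsum_mul_left, ← (s3.mul_left 2).tsum_sub s2, ← tsum_mul_left]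
  congr 1
  apply tsum_congr
  intro n
  have h1 := Am_rec m n
  have h2 : (Am m (n + m + 1) : ℂ) + Am (m+2) n = 2 * pb n := by exact_mod_cast h1
  rw [show n + (m + 1) = n + m + 1 by omega]
  linear_combination x ^ (n + m + 1) * h2

lemma Ag_rec (m : ℕ) (hm : 0 < m) (hx : ‖x‖ ≤ 1/10) :
    Ag m x = x ^ (m + 1) * (2 * Pb x - Ag (m+2) x) := by
  rw [Ag_rec_aux m hx 0, zero_add]
  apply Finset.sum_eq_zero
  intro n hn
  rw [Finset.mem_range] at hn
  rw [Am_zero m n (by omega) hm]; simp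

lemma Ag_zero_rec (hx : ‖x‖ ≤ 1/10) :
    Pb x = 1 + x * (2 * Pb x - Ag 2 x) := by
  have h := Ag_rec_aux (x := x) 0 hx 1 (by simp [Am_zero_eq, pb_zero])
  simp only [zero_add, pow_one] at h
  rw [← h]
  unfold Pb Ag
  simp only [Am_zero_eq]

lemma fg_bound (m n : ℕ) (hx : ‖x‖ ≤ 1/10) :
    ‖(-1) ^ n * x ^ ((n + 1) ^ 2 + m * (n + 1))‖ ≤ (1/10 : ℝ) ^ m * (1/10) ^ n := by
  rw [norm_mul, norm_pow, norm_neg, norm_one, one_pow, one_mul, norm_pow, ← pow_add]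
  calc _ ≤ (1/10 : ℝ) ^ ((n + 1) ^ 2 + m * (n + 1)) := pow_le_pow_left₀ (norm_nonneg _) hx _
    _ ≤ _ := pow_le_pow_of_le_one (by norm_num) (by norm_num) (by nlinarith)

lemma fg_summ (m : ℕ) (hx : ‖x‖ ≤ 1/10) :
    Summable (fun n : ℕ => (-1) ^ n * x ^ ((n + 1) ^ 2 + m * (n + 1))) :=
  Summable.of_norm_bounded
    ((summable_geometric_of_lt_one (by norm_num) (by norm_num)).mul_left _) (fun n => fg_bound m n hx)

lemma fg_norm (m : ℕ) (hx : ‖x‖ ≤ 1/10) : ‖fg m x‖ ≤ 2 := by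
  calc _ ≤ (1/10 : ℝ) ^ m * (1 - 1/10 : ℝ)⁻¹ :=
        tsum_of_norm_bounded ((hasSum_geometric_of_lt_one (by norm_num) (by norm_num)).mul_left _)
          (fun n => fg_bound m n hx)
    _ ≤ 1 * (1 - 1/10 : ℝ)⁻¹ := by
        apply mul_le_mul_of_nonneg_right _ (by norm_num)
        exact pow_le_one₀ (by norm_num) (by norm_num)
    _ ≤ _ := by norm_num

lemma fg_rec (m : ℕ) (hx : ‖x‖ ≤ 1/10) : fg m x = x ^ (m + 1) * (1 - fg (m+2) x) := by
  unfold fg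
  rw [(fg_summ m hx).tsum_eq_zero_add, mul_sub, ← tsum_mul_left, sub_eq_add_neg, ← tsum_neg]
  congr 1
  · simp; ring
  · apply tsum_congr
    intro n
    ring

lemma Ag_eq (m : ℕ) (hm : 0 < m) (hx : ‖x‖ ≤ 1/10) : Ag m x = 2 * Pb x * fg m x := by
  have hb : ∀ m, ‖Ag m x - 2 * Pb x * fg m x‖ ≤ 10 := by
    intro m
    have h1 : ‖Ag m x‖ ≤ 1 * 2 := norm_tsum_geo _ 1 (Am_norm m) hx
    have h2 : ‖Pb x‖ ≤ 1 * 2 := norm_tsum_geo _ 1 pb_norm hx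
    have h3 := fg_norm m hx
    calc _ ≤ ‖Ag m x‖ + ‖2 * Pb x * fg m x‖ := norm_sub_le _ _
      _ ≤ 2 + (2 * 2) * 2 := by
        rw [norm_mul, norm_mul, Complex.norm_ofNat]
        have := norm_nonneg (fg m x)
        have := norm_nonneg (Pb x)
        nlinarith
      _ = _ := by norm_num
  have hj : ∀ j m, 0 < m → ‖Ag m x - 2 * Pb x * fg m x‖ ≤ 10 * (1/10 : ℝ) ^ j := by
    intro j
    induction j with
    | zero => intro m _; simpa using hb m
    | succ j ih =>
      intro m hm
      have h1 : Ag m x - 2 * Pb x * fg m x = - x ^ (m + 1) * (Ag (m+2) x - 2 * Pb x * fg (m+2) x) := by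
        rw [Ag_rec m hm hx, fg_rec m hx]; ring
      rw [h1, norm_mul, norm_neg, norm_pow]
      have h2 := ih (m+2) (by omega)
      have h3 : ‖x‖ ^ (m + 1) ≤ 1/10 := by
        calc _ ≤ (1/10 : ℝ) ^ (m+1) := pow_le_pow_left₀ (norm_nonneg _) hx _
          _ ≤ (1/10 : ℝ) ^ 1 := pow_le_pow_of_le_one (by norm_num) (by norm_num) (by omega)
          _ = _ := by norm_num
      calc _ ≤ (1/10 : ℝ) * (10 * (1/10) ^ j) := by
            apply mul_le_mul h3 h2 (norm_nonneg _) (by norm_num)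
        _ = _ := by ring
  have hlim : Tendsto (fun j : ℕ => 10 * (1/10 : ℝ) ^ j) atTop (𝓝 0) := by
    have := (tendsto_pow_atTop_nhds_zero_of_lt_one (r := (1/10 : ℝ)) (by norm_num) (by norm_num)).const_mul 10
    simpa using this
  have h0 : ‖Ag m x - 2 * Pb x * fg m x‖ ≤ 0 :=
    ge_of_tendsto' hlim (fun j => hj j m hm)
  have := norm_le_zero_iff.1 h0
  linear_combination this

lemma Pb_f (hx : ‖x‖ ≤ 1/10) : Pb x * (1 - 2 * fg 0 x) = 1 := by
  have h1 := Ag_zero_rec hx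
  rw [Ag_eq 2 (by omega) hx] at h1
  have h2 := fg_rec (x := x) 0 hx
  simp only [zero_add, pow_one] at h2
  rw [h2]
  linear_combination h1

lemma cc_norm (m : ℕ) : ‖(cc m : ℂ)‖ ≤ 2 := by
  unfold cc
  split <;> norm_num

lemma cc_zero : cc 0 = 0 := rfl

/-- generating function of the rank difference -/
noncomputable def Fg (x : ℂ) : ℂ := ∑' n : ℕ, (Fn n : ℂ) * x ^ n

lemma dbl_bound (m n : ℕ) (hx : ‖x‖ ≤ 1/10) : ‖(cc m : ℂ) * Am m n * x ^ n‖ ≤ (2 * (1/2 : ℝ) ^ m) * (1/5) ^ n := by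
  rcases Nat.eq_zero_or_pos m with rfl | h
  · rw [cc_zero]; simp
  · rw [norm_mul, norm_mul, norm_pow, Complex.norm_natCast]
    have h1 : (Am m n : ℝ) * 2 ^ m ≤ 2 ^ n := by exact_mod_cast Am_le m n h
    have h2 : (Am m n : ℝ) ≤ 2 ^ n * (1/2) ^ m := by
      rw [one_div, inv_pow, ← div_eq_mul_inv, le_div_iff₀ (by positivity)]; exact h1
    calc _ ≤ 2 * (2 ^ n * (1/2 : ℝ) ^ m) * (1/10) ^ n := by
          apply mul_le_mul _ (pow_le_pow_left₀ (norm_nonneg _) hx _) (by positivity) (by positivity)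
          exact mul_le_mul (cc_norm m) h2 (by positivity) (by positivity)
      _ = (2 * (1/2 : ℝ) ^ m) * (2 * (1/10)) ^ n := by rw [mul_pow]; ring
      _ = _ := by norm_num

lemma dbl_summ (hx : ‖x‖ ≤ 1/10) : Summable (fun z : ℕ × ℕ => (cc z.1 : ℂ) * Am z.1 z.2 * x ^ z.2) := by
  apply Summable.of_norm_bounded (g := fun z : ℕ × ℕ => (2 * (1/2 : ℝ) ^ z.1) * (1/5) ^ z.2)
  · apply Summable.mul_of_nonneg (f := fun n : ℕ => 2 * (1/2 : ℝ) ^ n) (g := fun n : ℕ => (1/5 : ℝ) ^ n)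
    · exact (summable_geometric_of_lt_one (by norm_num) (by norm_num)).mul_left _
    · exact (summable_geometric_of_lt_one (by norm_num) (by norm_num))
    · intro n; positivity
    · intro n; positivity
  · intro z; exact dbl_bound z.1 z.2 hx

lemma Fn_term (n : ℕ) : (Fn n : ℂ) * x ^ n = pb n * x ^ n + ∑' m : ℕ, (cc m : ℂ) * Am m n * x ^ n := by
  unfold Fn
  rw [tsum_eq_sum (s := Finset.range (n+1))]
  · push_cast
    rw [add_mul, Finset.sum_mul]
  · intro m hm
    rw [Finset.mem_range] at hm
    rw [Am_zero m n (by omega) (by omega)]; simp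

lemma Fg_summ (hx : ‖x‖ ≤ 1/10) : Summable (fun n : ℕ => (Fn n : ℂ) * x ^ n) := by
  simp only [Fn_term]
  apply Summable.add (summ_geo (x := x) _ 1 (pb_norm) hx)
  have := (Equiv.prodComm ℕ ℕ).summable_iff.2 (dbl_summ hx)
  exact this.prod

lemma Fg_eq1 (hx : ‖x‖ ≤ 1/10) : Fg x = Pb x * (1 + 2 * ∑' m : ℕ, (cc m : ℂ) * fg m x) := by
  have h1 : Fg x = Pb x + ∑' m : ℕ, (cc m : ℂ) * Ag m x := by
    unfold Fg Pb Ag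
    have h2 := (Equiv.prodComm ℕ ℕ).summable_iff.2 (dbl_summ hx)
    simp only [Fn_term]
    have h3 : Summable (fun n => ∑' m : ℕ, (cc m : ℂ) * Am m n * x ^ n) := h2.prod
    rw [Summable.tsum_add (summ_geo (x := x) _ 1 (pb_norm) hx) h3]
    congr 1
    rw [Summable.tsum_comm (f := fun m n => (cc m : ℂ) * Am m n * x ^ n) (dbl_summ hx)]
    apply tsum_congr
    intro m
    rw [← tsum_mul_left]
    apply tsum_congr
    intro n; ring
  rw [h1, mul_add, mul_one, ← tsum_mul_left, ← tsum_mul_left]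
  congr 1
  apply tsum_congr
  intro m
  rcases Nat.eq_zero_or_pos m with rfl | h
  · rw [cc_zero]; simp
  · rw [Ag_eq m h hx]; ring

lemma int_tsum (f : ℤ → ℂ) (hf : Summable f) : ∑' n, f n =
    f 0 + ∑' n : ℕ, (f ((n : ℤ) + 1) + f (-((n:ℤ) + 1))) := by
  have h1 : Summable (fun n : ℕ => f n) := hf.comp_injective Nat.cast_injective
  have h2 : Summable (fun n : ℕ => f (-((n:ℤ) + 1))) := by
    apply hf.comp_injective (i := fun n : ℕ => -((n:ℤ) + 1))
    intro a b h
    simp only at h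
    omega
  have h3 : Summable (fun n : ℕ => f ((n:ℤ) + 1)) := by
    apply hf.comp_injective (i := fun n : ℕ => ((n:ℤ) + 1))
    intro a b h
    simp only at h
    omega
  rw [tsum_of_nat_of_neg_add_one h1 h2, h1.tsum_eq_zero_add, h3.tsum_add h2]
  push_cast
  ring

lemma theta4_eq (h0 : x ≠ 0) (hx : ‖x‖ ≤ 1/10) : J x (-1) = 1 - 2 * fg 0 x := by
  unfold J
  rw [int_tsum _ (summ_J x (-1) h0 (by linarith) (by norm_num))]
  unfold fg
  rw [← tsum_mul_left, sub_eq_add_neg, ← tsum_neg]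
  congr 1
  · simp
  · apply tsum_congr
    intro n
    rw [neg_sq, show ((n:ℤ)+1)^2 = (((n + 1)^2 : ℕ) : ℤ) by push_cast; ring, zpow_natCast, zpow_neg,
      show ((n:ℤ) + 1) = ((n + 1 : ℕ) : ℤ) by push_cast; ring, zpow_natCast]
    rcases Nat.even_or_odd n with h | h
    · rw [(Even.add_one h).neg_one_pow, h.neg_one_pow]; norm_num; ring
    · rw [(Odd.add_one h).neg_one_pow, h.neg_one_pow]; norm_num; ring

/-- Appell type sum -/
noncomputable def SA (b : ℤ) (x : ℂ) : ℂ := ∑' n : ℤ, (-1) ^ n * x ^ (n ^ 2 + b * n) / (1 - x ^ (5 * n))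

lemma denom_bound (y : ℂ) (h : ‖y‖ ≤ 1/2 ∨ 2 ≤ ‖y‖) : ‖(1 - y)⁻¹‖ ≤ 2 := by
  have h1 : 1/2 ≤ ‖1 - y‖ := by
    rcases h with h | h
    · have := norm_sub_norm_le (1:ℂ) y
      rw [norm_one] at this
      linarith
    · have := norm_sub_norm_le y 1
      rw [norm_one, norm_sub_rev] at this
      linarith
  rw [norm_inv]
  rw [inv_le_comm₀ (by linarith) (by norm_num)]
  linarith

lemma zpow_small (h0 : x ≠ 0) (hx : ‖x‖ ≤ 1/10) (n : ℤ) (hn : n ≠ 0) :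
    ‖x ^ n‖ ≤ 1/2 ∨ 2 ≤ ‖x ^ n‖ := by
  have hpos : 0 < ‖x‖ := norm_pos_iff.2 h0
  have key : ∀ k : ℕ, ‖x ^ (k + 1)‖ ≤ 1/2 := by
    intro k
    rw [norm_pow]
    calc _ ≤ (1/10:ℝ) ^ (k+1) := pow_le_pow_left₀ (norm_nonneg _) hx _
      _ ≤ (1/10:ℝ) ^ 1 := pow_le_pow_of_le_one (by norm_num) (by norm_num) (by omega)
      _ ≤ _ := by norm_num
  rcases lt_or_gt_of_ne hn with h | h
  · right
    obtain ⟨k, hk⟩ := Int.eq_ofNat_of_zero_le (show 0 ≤ -n - 1 by omega)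
    have : n = -((k + 1 : ℕ) : ℤ) := by push_cast; omega
    rw [this, zpow_neg, zpow_natCast, norm_inv, le_inv_comm₀ (by norm_num) (norm_pos_iff.2 (pow_ne_zero _ h0))]
    have := key k
    linarith
  · left
    obtain ⟨k, hk⟩ := Int.eq_ofNat_of_zero_le (show 0 ≤ n - 1 by omega)
    have : n = ((k + 1 : ℕ) : ℤ) := by push_cast; omega
    rw [this, zpow_natCast]
    exact key k

lemma SA_summ (b : ℤ) (h0 : x ≠ 0) (hx : ‖x‖ ≤ 1/10) :
    Summable (fun n : ℤ => (-1) ^ n * x ^ (n ^ 2 + b * n) / (1 - x ^ (5 * n))) := by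
  have h := ((summ_J x (-x^b) h0 (by linarith) (neg_ne_zero.2 (zpow_ne_zero _ h0))).norm).mul_right 2
  apply Summable.of_norm_bounded h
  intro n
  have e : (-1:ℂ) ^ n * x ^ (n ^ 2 + b * n) = x ^ (n^2) * (-x^b) ^ n := by
    rw [zpow_add₀ h0, zpow_mul, neg_eq_neg_one_mul (x ^ b), mul_zpow]; ring
  rw [div_eq_mul_inv, norm_mul, e]
  apply mul_le_mul_of_nonneg_left _ (norm_nonneg _)
  by_cases hn : n = 0
  · subst hn; simp
  · exact denom_bound _ (zpow_small h0 hx _ (by omega))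

lemma one_sub_pow_ne (h0 : x ≠ 0) (hx : ‖x‖ ≤ 1/10) (n : ℤ) (hn : n ≠ 0) : 1 - x ^ n ≠ 0 := by
  intro h
  have h1 : x ^ n = 1 := by linear_combination -h
  have h2 := zpow_small h0 hx n hn
  rw [h1, norm_one] at h2
  rcases h2 with h2 | h2 <;> norm_num at h2

lemma SA_nat (b : ℕ) (hb : b ≤ 5) (h0 : x ≠ 0) (hx : ‖x‖ ≤ 1/10) :
    SA b x = ∑' n : ℕ, -((-1) ^ n * x ^ ((n+1)^2) * ((x^(n+1)) ^ b - (x^(n+1)) ^ (5 - b)) / (1 - (x ^ (n+1))^5)) ∧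
    Summable (fun n : ℕ => -((-1) ^ n * x ^ ((n+1)^2) * ((x^(n+1)) ^ b - (x^(n+1)) ^ (5 - b)) / (1 - (x ^ (n+1))^5))) := by
  have key : ∀ n : ℕ, (fun n : ℤ => (-1) ^ n * x ^ (n ^ 2 + b * n) / (1 - x ^ (5 * n))) ((n:ℤ) + 1) +
      (fun n : ℤ => (-1) ^ n * x ^ (n ^ 2 + b * n) / (1 - x ^ (5 * n))) (-((n:ℤ) + 1)) = 
      -((-1) ^ n * x ^ ((n+1)^2) * ((x^(n+1)) ^ b - (x^(n+1)) ^ (5 - b)) / (1 - (x ^ (n+1))^5)) := by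
    intro n
    simp only
    have hX : x ^ (n+1) ≠ 0 := pow_ne_zero _ h0
    have hd : 1 - (x ^ (n+1))^5 ≠ 0 := by
      have := one_sub_pow_ne h0 hx (((n+1)*5 : ℕ) : ℤ) (by push_cast; omega)
      rwa [zpow_natCast, pow_mul] at this
    have e1 : x ^ (((n:ℤ) + 1)^2 + b * ((n:ℤ)+1)) = x ^ ((n+1)^2) * (x^(n+1))^b := by
      rw [← pow_mul, ← pow_add, ← zpow_natCast]; congr 1; push_cast; ring
    have e2 : x ^ ((-((n:ℤ) + 1))^2 + b * (-((n:ℤ)+1))) = x ^ ((n+1)^2) * ((x^(n+1))^b)⁻¹ := by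
      rw [zpow_add₀ h0, mul_neg, zpow_neg, ← pow_mul, neg_sq]
      rw [show (b:ℤ) * ((n:ℤ)+1) = (((n+1)*b : ℕ) : ℤ) by push_cast; ring, zpow_natCast,
        show ((n:ℤ)+1)^2 = (((n + 1)^2 : ℕ) : ℤ) by push_cast; ring, zpow_natCast]
    have e3 : x ^ (5 * ((n:ℤ)+1)) = (x^(n+1))^5 := by
      rw [← pow_mul, ← zpow_natCast]; congr 1; push_cast; ring
    have e4 : x ^ (5 * (-((n:ℤ)+1))) = ((x^(n+1))^5)⁻¹ := by
      rw [mul_neg, zpow_neg, e3]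
    have e5 : (-1:ℂ) ^ ((n:ℤ)+1) = - (-1)^n := by
      rw [show ((n:ℤ) + 1) = ((n + 1 : ℕ) : ℤ) by push_cast; ring, zpow_natCast]; ring
    have e6 : (-1:ℂ) ^ (-((n:ℤ)+1)) = - (-1)^n := by
      rw [zpow_neg, e5]
      rcases Nat.even_or_odd n with h | h
      · rw [h.neg_one_pow]; norm_num
      · rw [h.neg_one_pow]; norm_num
    rw [e1, e2, e3, e4, e5, e6]
    generalize x ^ (n+1) = X at *
    have e7 : X ^ (5 - b) = X ^ 5 * (X ^ b)⁻¹ := by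
      rw [pow_sub₀ _ hX hb]
    have hd2 : 1 - (X^5)⁻¹ = -(1 - X^5) * (X^5)⁻¹ := by field_simp; ring
    rw [e7, hd2]
    field_simp
    ring
  have hs := SA_summ b h0 hx
  constructor
  · unfold SA
    rw [int_tsum _ hs, tsum_congr key]
    simp
  · have h2 : Summable (fun n : ℕ => (fun n : ℤ => (-1) ^ n * x ^ (n ^ 2 + b * n) / (1 - x ^ (5 * n))) (-((n:ℤ) + 1))) := by
      apply hs.comp_injective (i := fun n : ℕ => -((n:ℤ) + 1))
      intro a b h
      simp only at h
      omega
    have h3 : Summable (fun n : ℕ => (fun n : ℤ => (-1) ^ n * x ^ (n ^ 2 + b * n) / (1 - x ^ (5 * n))) ((n:ℤ) + 1)) := by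
      apply hs.comp_injective (i := fun n : ℕ => ((n:ℤ) + 1))
      intro a b h
      simp only at h
      omega
    exact (h3.add h2).congr (fun n => key n)

lemma cc_gen (X : ℂ) (hX : ‖X‖ < 1) : (1 - X^5) * ∑' m : ℕ, (cc m : ℂ) * X ^ m = -2 * X + X^2 - X^3 + 2 * X^4 := by
  have hs : Summable (fun m : ℕ => (cc m : ℂ) * X ^ m) := by
    apply Summable.of_norm_bounded (g := fun m : ℕ => 2 * ‖X‖ ^ m)
    · exact (summable_geometric_of_lt_one (norm_nonneg _) hX).mul_left _
    · intro m
      rw [norm_mul, norm_pow]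
      exact mul_le_mul_of_nonneg_right (cc_norm m) (by positivity)
  have h1 := hs.sum_add_tsum_nat_add 5
  have h2 : ∑' m : ℕ, (cc (m + 5) : ℂ) * X ^ (m + 5) = X^5 * ∑' m : ℕ, (cc m : ℂ) * X ^ m := by
    rw [← tsum_mul_left]
    apply tsum_congr
    intro m
    have : cc (m+5) = cc m := by unfold cc; simp
    rw [this]; ring
  rw [h2] at h1
  simp only [Finset.sum_range_succ, Finset.range_zero, Finset.sum_empty, show cc 0 = 0 from rfl,
    show cc 1 = -2 from rfl, show cc 2 = 1 from rfl, show cc 3 = -1 from rfl, show cc 4 = 2 from rfl,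
    zero_add] at h1
  norm_num at h1
  linear_combination -h1

lemma G_eq (h0 : x ≠ 0) (hx : ‖x‖ ≤ 1/10) :
    1 + 2 * ∑' m : ℕ, (cc m : ℂ) * fg m x = 1 + 4 * SA 1 x - 2 * SA 2 x := by
  have hs : Summable (fun z : ℕ × ℕ => (cc z.1 : ℂ) * ((-1) ^ z.2 * x ^ ((z.2 + 1) ^ 2 + z.1 * (z.2 + 1)))) := by
    apply Summable.of_norm_bounded (g := fun z : ℕ × ℕ => (2 * (1/10 : ℝ) ^ z.1) * (1/10) ^ z.2)
    · apply Summable.mul_of_nonneg (f := fun n : ℕ => 2 * (1/10 : ℝ) ^ n) (g := fun n : ℕ => (1/10 : ℝ) ^ n)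
      · exact (summable_geometric_of_lt_one (by norm_num) (by norm_num)).mul_left _
      · exact (summable_geometric_of_lt_one (by norm_num) (by norm_num))
      · intro n; positivity
      · intro n; positivity
    · intro z
      rw [norm_mul, mul_assoc]
      exact mul_le_mul (cc_norm _) (fg_bound z.1 z.2 hx) (norm_nonneg _) (by norm_num)
  have h1 : ∑' m : ℕ, (cc m : ℂ) * fg m x = ∑' n : ℕ, (-1) ^ n * x ^ ((n+1)^2) *
      ((-2 * x^(n+1) + (x^(n+1))^2 - (x^(n+1))^3 + 2 * (x^(n+1))^4) / (1 - (x^(n+1))^5)) := by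
    unfold fg
    simp only [← tsum_mul_left]
    rw [← Summable.tsum_comm (f := fun m n => (cc m : ℂ) * ((-1) ^ n * x ^ ((n + 1) ^ 2 + m * (n + 1)))) hs]
    apply tsum_congr
    intro n
    have hd : 1 - (x ^ (n+1))^5 ≠ 0 := by
      have := one_sub_pow_ne h0 hx (((n+1)*5 : ℕ) : ℤ) (by push_cast; omega)
      rwa [zpow_natCast, pow_mul] at this
    have hn : ‖x ^ (n+1)‖ < 1 := by
      rw [norm_pow]; exact pow_lt_one₀ (norm_nonneg _) (by linarith) (by omega)
    rw [← cc_gen _ hn, mul_div_cancel_left₀ _ hd, ← tsum_mul_left]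
    apply tsum_congr
    intro m
    ring
  obtain ⟨a1, b1⟩ := SA_nat 1 (by norm_num) h0 hx
  obtain ⟨a2, b2⟩ := SA_nat 2 (by norm_num) h0 hx
  have a1' : SA 1 x = _ := a1
  have a2' : SA 2 x = _ := a2
  rw [h1, a1', a2', add_sub_assoc, ← tsum_mul_left, ← tsum_mul_left, ← tsum_mul_left, ← (b1.mul_left 4).tsum_sub (b2.mul_left 2)]
  congr 1
  apply tsum_congr
  intro n
  norm_num
  ring

/-- main output of the generating function part -/
lemma Fg_main (h0 : x ≠ 0) (hx : ‖x‖ ≤ 1/10) :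
    J x (-1) ≠ 0 ∧ Fg x * J x (-1) = 1 + 4 * SA 1 x - 2 * SA 2 x := by
  have h1 := Pb_f hx
  rw [← theta4_eq h0 hx] at h1
  refine ⟨right_ne_zero_of_mul_eq_one h1, ?_⟩
  rw [Fg_eq1 hx, G_eq h0 hx]
  linear_combination (1 + 4 * SA 1 x - 2 * SA 2 x) * h1

end OP

namespace OP
open Filter Topology MeasureTheory

noncomputable def cf (D : ℂ → ℂ) (n : ℤ) (r : ℝ) : ℂ :=
  (2 * Real.pi : ℂ)⁻¹ * ∫ θ in (0:ℝ)..2 * Real.pi, (circleMap 0 r θ) ^ (-n) * D (circleMap 0 r θ)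

lemma cf_circle (D : ℂ → ℂ) (n : ℤ) (r : ℝ) (hr : 0 < r) :
    cf D n r = (2 * Real.pi : ℂ)⁻¹ * (Complex.I⁻¹ * ∮ z in C(0, r), z ^ (-n-1) * D z) := by
  unfold cf circleIntegral
  congr 1
  rw [← intervalIntegral.integral_const_mul]
  congr 1
  ext θ
  have h : circleMap 0 r θ ≠ 0 := by
    have := circleMap_ne_center (c := 0) (R := r) (θ := θ) hr.ne'
    exact this
  simp only []
  rw [deriv_circleMap, smul_eq_mul]
  beta_reduce
  rw [zpow_sub₀ h, zpow_one]
  field_simp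

lemma cf_indep (D : ℂ → ℂ) (a b : ℝ) (ha : 0 ≤ a)
    (hD : ∀ z, a < ‖z‖ → ‖z‖ < b → DifferentiableAt ℂ D z) (n : ℤ) (r R : ℝ)
    (hr : a < r) (hrR : r ≤ R) (hR : R < b) : cf D n r = cf D n R := by
  have h0 : 0 < r := by linarith
  rw [cf_circle D n r h0, cf_circle D n R (by linarith)]
  congr 2
  symm
  have hd : ∀ z : ℂ, r ≤ ‖z‖ → ‖z‖ ≤ R → DifferentiableAt ℂ (fun z => z ^ (-n-1) * D z) z := by
    intro z h1 h2
    refine DifferentiableAt.mul ?_ (hD z (by linarith) (by linarith))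
    refine DifferentiableAt.zpow differentiableAt_id (Or.inl ?_)
    intro h; rw [h, norm_zero] at h1; linarith
  refine Complex.circleIntegral_eq_of_differentiable_on_annulus_off_countable h0 hrR
    (Set.countable_empty) ?_ ?_
  · intro z hz
    simp at hz
    exact (hd z hz.2 hz.1).continuousAt.continuousWithinAt
  · intro z hz
    simp at hz
    exact hd z hz.2.le hz.1.le

lemma cf_step (D : ℂ → ℂ) (p : ℝ) (R : ℝ) (hp : 0 < p) (hR : 0 < R) (y : ℂ) (hy : y ≠ 0)
    (hfe : ∀ z : ℂ, ‖z‖ = R → D (p * z) = - D z / (p * y * z ^ 2)) (n : ℤ)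
    (hi : ∀ n, cf D n (p * R) = cf D n R) :
    cf D (n+2) R = - (p:ℂ) ^ (n+1) * y * cf D n R := by
  have hpc : (p:ℂ) ≠ 0 := by exact_mod_cast hp.ne'
  rw [← hi n]
  unfold cf
  rw [mul_left_comm]
  congr 1
  rw [← intervalIntegral.integral_const_mul]
  congr 1
  ext θ
  have h : circleMap 0 R θ ≠ 0 := circleMap_ne_center (c := 0) (R := R) (θ := θ) hR.ne'
  have h2 : circleMap 0 (p * R) θ = p * circleMap 0 R θ := by
    simp [circleMap]; ring
  have h3 : ‖circleMap 0 R θ‖ = R := by simp [circleMap, abs_of_pos hR]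
  rw [h2, hfe _ h3, mul_zpow, show -(n+2) = -n + (-2 : ℤ) by ring, zpow_add₀ h, zpow_add₀ hpc,
    zpow_neg (p:ℂ) n]
  have := zpow_ne_zero n hpc
  generalize (circleMap 0 R θ) = w at *
  rw [show w ^ (-2 : ℤ) = (w^2)⁻¹ by rw [zpow_neg]; norm_cast]
  simp only [zpow_one]
  field_simp

lemma laurent_hasSum (D : ℂ → ℂ) (r : ℝ) (hr : 0 < r)
    (hD : ∀ z, ‖z‖ = r → ContinuousAt D z)
    (hs : Summable (fun n : ℤ => cf D n r * (r:ℂ) ^ n)) (z : ℂ) (hz : ‖z‖ = r) :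
    HasSum (fun n : ℤ => cf D n r * z ^ n) (D z) := by
  haveI : Fact (0 < 2 * Real.pi) := ⟨Real.two_pi_pos⟩
  have hrc : (r:ℂ) ≠ 0 := by exact_mod_cast hr.ne'
  let g : C(AddCircle (2 * Real.pi), ℂ) :=
    ⟨fun θ => D (r * (AddCircle.toCircle θ : ℂ)), by
      rw [continuous_iff_continuousAt]
      intro θ
      have h1 : ContinuousAt D (r * (AddCircle.toCircle θ : ℂ)) := by
        apply hD
        rw [norm_mul, Circle.norm_coe, mul_one]; simp [abs_of_pos hr]
      have h2 : ContinuousAt (fun θ : AddCircle (2 * Real.pi) => (r * (AddCircle.toCircle θ : ℂ))) θ := by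
        have : Continuous (fun θ : AddCircle (2 * Real.pi) => (AddCircle.toCircle θ : ℂ)) :=
          continuous_subtype_val.comp AddCircle.continuous_toCircle
        exact (continuous_const.mul this).continuousAt
      exact ContinuousAt.comp (f := (fun θ : AddCircle (2 * Real.pi) => (r * (AddCircle.toCircle θ : ℂ)))) h1 h2⟩
  have hpi : (Real.pi : ℂ) ≠ 0 := by exact_mod_cast Real.pi_ne_zero
  have hc : ∀ n, fourierCoeff g n = cf D n r * (r:ℂ) ^ n := by
    intro n
    rw [fourierCoeff_eq_intervalIntegral _ _ 0, cf, mul_assoc, ← intervalIntegral.integral_mul_const]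
    rw [Complex.real_smul]
    push_cast
    rw [zero_add, one_div]
    congr 1
    congr 1
    ext θ
    have hcm : circleMap 0 r θ = r * Complex.exp (θ * Complex.I) := by simp [circleMap]
    have e1 : ((AddCircle.toCircle (θ : AddCircle (2 * Real.pi)) : ℂ)) = Complex.exp (θ * Complex.I) := by
      have := fourier_coe_apply (T := 2 * Real.pi) (n := 1) (x := θ)
      rw [fourier_one] at this
      rw [this]; congr 1; push_cast; field_simp
    have hg : g (θ : AddCircle (2 * Real.pi)) = D (circleMap 0 r θ) := by
      rw [hcm, ← e1]; rfl
    rw [hg, fourier_coe_apply, smul_eq_mul, hcm, mul_zpow, ← Complex.exp_int_mul]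
    have : Complex.exp (2 * ↑Real.pi * Complex.I * ↑(-n) * ↑θ / ↑(2 * Real.pi)) = Complex.exp (↑(-n) * (↑θ * Complex.I)) := by
      congr 1; push_cast; field_simp
    rw [this, zpow_neg]
    have := zpow_ne_zero n hrc
    field_simp
  have hs' : Summable (fourierCoeff g) := by
    refine hs.congr ?_
    intro n; rw [hc]
  obtain ⟨θ, hθ⟩ : ∃ θ : ℝ, z = r * Complex.exp (θ * Complex.I) :=
    ⟨Complex.arg z, by rw [← hz]; exact (Complex.norm_mul_exp_arg_mul_I z).symm⟩
  have e1 : ((AddCircle.toCircle (θ : AddCircle (2 * Real.pi)) : ℂ)) = Complex.exp (θ * Complex.I) := by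
    have := fourier_coe_apply (T := 2 * Real.pi) (n := 1) (x := θ)
    rw [fourier_one] at this
    rw [this]; congr 1; push_cast; field_simp
  have := has_pointwise_sum_fourier_series_of_summable hs' (θ : AddCircle (2 * Real.pi))
  have hg : g (θ : AddCircle (2 * Real.pi)) = D z := by
    rw [hθ, ← e1]; rfl
  rw [hg] at this
  convert! this using 2 with n
  rw [hc, hθ, mul_zpow, smul_eq_mul, fourier_coe_apply, ← Complex.exp_int_mul]
  have : Complex.exp (2 * ↑Real.pi * Complex.I * ↑n * ↑θ / ↑(2 * Real.pi)) = Complex.exp (↑n * (↑θ * Complex.I)) := by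
    congr 1; push_cast; field_simp
  rw [this]; ring

def parityEquiv : ℤ ⊕ ℤ ≃ ℤ where
  toFun := Sum.elim (fun m => 2 * m) (fun m => 2 * m + 1)
  invFun n := if n % 2 = 0 then Sum.inl (n / 2) else Sum.inr (n / 2)
  left_inv := by
    rintro (m | m)
    · simp
    · simp; omega
  right_inv := by
    intro n
    by_cases h : n % 2 = 0
    · simp [h]; omega
    · simp [h]; omega

lemma hasSum_parity (f : ℤ → ℂ) (A B : ℂ) (h0 : HasSum (fun m => f (2*m)) A)
    (h1 : HasSum (fun m => f (2*m+1)) B) : HasSum f (A + B) := by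
  rw [← parityEquiv.hasSum_iff]
  exact HasSum.sum (f := f ∘ parityEquiv) h0 h1

theorem laurent_main (D : ℂ → ℂ) (a b p R : ℝ) (ha : 0 ≤ a) (hp : 0 < p) (hp1 : p < 1)
    (haR : a < p * R) (hRb : R < b)
    (hD : ∀ z, a < ‖z‖ → ‖z‖ < b → DifferentiableAt ℂ D z) (y : ℂ) (hy : y ≠ 0)
    (hfe : ∀ z : ℂ, ‖z‖ = R → D (p * z) = - D z / (p * y * z ^ 2)) :
    ∃ c0 c1 : ℂ, ∀ z : ℂ, p * R ≤ ‖z‖ → ‖z‖ ≤ R →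
      D z = c0 * J p (-(z^2 * y)) + c1 * (z * J p (-(p * z^2 * y))) := by
  have hpR : 0 < p * R := by linarith
  have hR : 0 < R := pos_of_mul_pos_right hpR hp.le
  have hpc : (p:ℂ) ≠ 0 := by exact_mod_cast hp.ne'
  have hpn : ‖(p:ℂ)‖ < 1 := by simpa [abs_of_pos hp] using hp1
  have hpRR : p * R ≤ R := by nlinarith
  have hi : ∀ n, cf D n (p * R) = cf D n R := fun n =>
    cf_indep D a b ha hD n _ _ haR hpRR hRb
  have hst := cf_step D p R hp hR y hy hfe
  set c := fun n => cf D n R with hcdef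
  have hst' : ∀ n, c (n+2) = - (p:ℂ) ^ (n+1) * y * c n := fun n => hst n hi
  have hev : ∀ m : ℤ, c (2*m) = c 0 * ((p:ℂ) ^ (m^2) * (-y) ^ m) := by
    intro m
    induction m using Int.induction_on with
    | zero => simp
    | succ k ih =>
      rw [show (2 * ((k:ℤ)+1)) = 2 * k + 2 by ring, hst', ih,
        show ((k:ℤ)+1)^2 = k^2 + (2*k+1) by ring, zpow_add₀ hpc (k^2) (2*k+1), zpow_add₀ (neg_ne_zero.2 hy) k 1, zpow_one (-y)]
      ring
    | pred k ih =>
      have h := hst' (2 * (-(k:ℤ) - 1))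
      rw [show (2 * (-(k:ℤ) - 1)) + 2 = 2 * (-k) by ring, ih] at h
      have e1 := zpow_ne_zero (2 * (-(k:ℤ) - 1) + 1) hpc
      rw [show (-(k:ℤ))^2 = (-(k:ℤ) - 1)^2 + (2 * (-(k:ℤ) - 1) + 1) by ring, zpow_add₀ hpc,
        show (-(k:ℤ)) = (-(k:ℤ) - 1) + 1 by ring, zpow_add₀ (neg_ne_zero.2 hy) _ 1, zpow_one] at h
      have e2 : -(p:ℂ) ^ (2 * (-(k:ℤ) - 1) + 1) * y ≠ 0 := mul_ne_zero (neg_ne_zero.2 e1) hy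
      apply mul_left_cancel₀ e2
      ring_nf at h ⊢
      rw [← h]
  have hod : ∀ m : ℤ, c (2*m+1) = c 1 * ((p:ℂ) ^ (m^2) * (-(p*y)) ^ m) := by
    intro m
    have hpy : -((p:ℂ)*y) ≠ 0 := neg_ne_zero.2 (mul_ne_zero hpc hy)
    induction m using Int.induction_on with
    | zero => simp
    | succ k ih =>
      rw [show (2 * ((k:ℤ)+1)+1) = (2 * k + 1) + 2 by ring, hst', ih,
        show ((k:ℤ)+1)^2 = k^2 + (2*k+1) by ring, zpow_add₀ hpc (k^2) (2*k+1), zpow_add₀ hpy k 1,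
        zpow_one (-((p:ℂ)*y)), zpow_add₀ hpc (2*k+1) 1, zpow_one (p:ℂ)]
      ring
    | pred k ih =>
      have h := hst' (2 * (-(k:ℤ) - 1) + 1)
      rw [show (2 * (-(k:ℤ) - 1)) + 1 + 2 = 2 * (-k) + 1 by ring, ih] at h
      have e1 := zpow_ne_zero (2 * (-(k:ℤ) - 1) + 1) hpc
      rw [show (-(k:ℤ))^2 = (-(k:ℤ) - 1)^2 + (2 * (-(k:ℤ) - 1) + 1) by ring, zpow_add₀ hpc,
        show (-(k:ℤ)) = (-(k:ℤ) - 1) + 1 by ring, zpow_add₀ hpy _ 1, zpow_one,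
        zpow_add₀ hpc (2 * (-(k:ℤ) - 1 + 1 - 1) + 1) 1, zpow_one] at h
      have e2 : -(p:ℂ) ^ (2 * (-(k:ℤ) - 1) + 1) * (p * y) ≠ 0 := mul_ne_zero (neg_ne_zero.2 e1) (mul_ne_zero hpc hy)
      apply mul_left_cancel₀ e2
      ring_nf at h ⊢
      rw [← h]
  refine ⟨c 0, c 1, ?_⟩
  have key : ∀ z : ℂ, z ≠ 0 → HasSum (fun n : ℤ => c n * z ^ n)
      (c 0 * J p (-(z^2 * y)) + c 1 * (z * J p (-(p * z^2 * y)))) := by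
    intro z hz
    have hz2 : -(z^2*y) ≠ 0 := neg_ne_zero.2 (mul_ne_zero (pow_ne_zero _ hz) hy)
    have hz3 : -(p * z^2*y) ≠ 0 := neg_ne_zero.2 (mul_ne_zero (mul_ne_zero hpc (pow_ne_zero _ hz)) hy)
    apply hasSum_parity
    · have := ((summ_J (p:ℂ) _ hpc hpn hz2).hasSum).mul_left (c 0)
      convert! this using 2 with m
      rw [hev, show -(z^2*y) = z^2 * (-y) by ring, mul_zpow, zpow_mul]
      norm_cast; ring
    · have := ((summ_J (p:ℂ) _ hpc hpn hz3).hasSum).mul_left (c 1 * z)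
      rw [← mul_assoc]
      convert! this using 2 with m
      rw [hod, show -(p*z^2*y) = z^2 * (-(p*y)) by ring, mul_zpow (z^2), zpow_add₀ hz, zpow_mul, zpow_one]
      norm_cast; ring
  intro z h1 h2
  have hzp : 0 < ‖z‖ := by linarith
  have hz : z ≠ 0 := norm_pos_iff.1 hzp
  have hc' : ∀ n, cf D n ‖z‖ = c n := fun n =>
    cf_indep D a b ha hD n _ _ (by linarith) h2 hRb
  have hs := (key (‖z‖:ℂ) (by exact_mod_cast hzp.ne')).summable
  have := laurent_hasSum D ‖z‖ hzp (fun w hw => (hD w (by linarith) (by linarith)).continuousAt)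
    (by simpa only [hc'] using hs) z rfl
  simp only [hc'] at this
  exact this.unique (key z hz)

end OP

namespace OP
open Filter Topology MeasureTheory

noncomputable def th (s z : ℂ) : ℂ := J s (-(z/s))

lemma th_shift (s z : ℂ) (h0 : s ≠ 0) (hz : z ≠ 0) : th s (s^2*z) = -z⁻¹ * th s z := by
  unfold th
  rw [show -(s^2*z/s) = s^2 * (-(z/s)) by field_simp, J_shift _ _ h0 (by simp [hz, h0])]
  congr 1
  field_simp

lemma th_inv (s z : ℂ) (h0 : s ≠ 0) (hz : z ≠ 0) : th s z⁻¹ = -z⁻¹ * th s z := by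
  rw [← th_shift s z h0 hz]
  unfold th
  rw [← J_inv]
  congr 1
  field_simp

lemma th_one (s : ℂ) (h0 : s ≠ 0) : th s 1 = 0 := by
  unfold th
  rw [show -(1/s) = (-s)⁻¹ by field_simp, J_inv, J_zero _ h0]

lemma th_add (s X Y : ℂ) (h0 : s ≠ 0) (hs : ‖s‖ < 1) (hX : X ≠ 0) (hY : Y ≠ 0) :
    th s (-(X*Y)) * th s (X/Y) = -X^2 * J (s^2) (-(s^2*X^2)) * J (s^2) (-Y^2)
      + X*Y*J (s^2) (-X^2) * J (s^2) (-(s^2*Y^2)) := by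
  have hI := Complex.I_ne_zero
  have h := J_add s (-(Complex.I*X/s)) (Complex.I*Y) h0 hs (by simp [hX, h0]) (by simp [hY])
  have e1 : -(Complex.I*X/s) * (Complex.I*Y) = -(-(X*Y)/s) := by
    linear_combination (-(X*Y)/s) * Complex.I_sq
  have e2 : -(Complex.I*X/s) / (Complex.I*Y) = -(X/Y/s) := by
    field_simp
  have e3 : (Complex.I*Y)^2 = -Y^2 := by linear_combination Y^2 * Complex.I_sq
  have e4 : (-(Complex.I*X/s))^2 = -X^2/s^2 := by
    rw [neg_sq, div_pow, mul_pow, Complex.I_sq]; ring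
  have e5 : s * -(Complex.I*X/s) * (Complex.I*Y) = X * Y := by
    field_simp; linear_combination (-1) * Complex.I_sq
  have e6 : J (s^2) (-(s^2*X^2)) = -(X^2)⁻¹ * J (s^2) (-X^2/s^2) := by
    have := J_shift (s := s^2) (w := -X^2/s^2) (pow_ne_zero _ h0) (by simp [hX, h0])
    rw [show -(s^2*X^2) = (s^2)^2 * (-X^2/s^2) by field_simp, this]
    congr 1; field_simp
  rw [e5, e1, e2, e3, e4] at h
  unfold th
  rw [h, e6, show s^2 * (-X^2/s^2) = -X^2 by field_simp, show s^2 * -Y^2 = -(s^2*Y^2) by ring]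
  field_simp

noncomputable def phT (s : ℂ) (n : ℕ) (z : ℂ) : ℂ :=
  (-1)^n * s^(n*(n+1)) * ∑ k ∈ Finset.range (2*n+1), z^((k:ℤ)-n)

noncomputable def ph (s z : ℂ) : ℂ := ∑' n : ℕ, phT s n z

lemma th_ph (s z : ℂ) (h0 : s ≠ 0) (hs : ‖s‖ < 1) (hz : z ≠ 0) : th s z = (1 - z) * ph s z := by
  have hw : -(z/s) ≠ 0 := by simp [hz, h0]
  have hsum := summ_J s _ h0 hs hw
  have hsn : Summable (fun m : ℤ => s^((-m)^2) * (-(z/s))^(-m)) :=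
    (Equiv.neg ℤ).summable_iff.2 hsum
  unfold th J ph
  rw [← (Equiv.neg ℤ).tsum_eq, ← tsum_mul_left]
  have hA : Summable (fun n : ℕ => s^((-(n:ℤ))^2) * (-(z/s))^(-(n:ℤ))) :=
    hsn.comp_injective (i := fun n : ℕ => (n:ℤ)) Nat.cast_injective
  have hB : Summable (fun n : ℕ => s^((-(-((n:ℤ)+1)))^2) * (-(z/s))^(-(-((n:ℤ)+1)))) :=
    hsn.comp_injective (i := fun n : ℕ => (-((n:ℤ)+1))) (by intro a b h; simpa using h)
  have := tsum_of_nat_of_neg_add_one (f := fun m : ℤ => s^((-m)^2) * (-(z/s))^(-m)) hA hB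
  simp only [Equiv.neg_apply]
  rw [this, ← hA.tsum_add hB]
  congr 1
  ext n
  unfold phT
  have hg : (1 - z) * ∑ k ∈ Finset.range (2*n+1), z^((k:ℤ)-n) = z^(-(n:ℤ)) - z^((n:ℤ)+1) := by
    have h1 : ∀ k ∈ Finset.range (2*n+1), z^((k:ℤ)-n) = z^(-(n:ℤ)) * z^k := by
      intro k _
      rw [show (k:ℤ)-n = -n + k by ring, zpow_add₀ hz, zpow_natCast]
    rw [Finset.sum_congr rfl h1, ← Finset.mul_sum, mul_left_comm, mul_neg_geom_sum]
    rw [mul_sub, mul_one, ← zpow_natCast, ← zpow_add₀ hz]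
    congr 2; push_cast; ring
  rw [mul_left_comm, hg, neg_neg]
  rw [show -(z/s) = (-1) * z * s⁻¹ by ring]
  simp only [mul_zpow, inv_zpow']
  have hm : ((-1:ℂ))^(-(n:ℤ)) = (-1)^n := by
    rw [zpow_neg, zpow_natCast]; 
    rcases Nat.even_or_odd n with h | h <;> simp [h.neg_one_pow]
  have hm1 : ((-1:ℂ))^((n:ℤ)+1) = -(-1)^n := by
    rw [zpow_add₀ (by norm_num), zpow_natCast]; simp
  rw [hm, hm1, mul_sub]
  have e1 : s^((-(n:ℤ))^2) * s^(-(-(n:ℤ))) = s^(n*(n+1)) := by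
    rw [← zpow_add₀ h0, ← zpow_natCast]; congr 1; push_cast; ring
  have e2 : s^(((n:ℤ)+1)^2) * s^(-((n:ℤ)+1)) = s^(n*(n+1)) := by
    rw [← zpow_add₀ h0, ← zpow_natCast]; congr 1; push_cast; ring
  calc _ = (-1)^n * (s^((-(n:ℤ))^2) * s^(-(-(n:ℤ)))) * z^(-(n:ℤ)) - (-1)^n * (s^(((n:ℤ)+1)^2) * s^(-((n:ℤ)+1))) * z^((n:ℤ)+1) := by ring
    _ = _ := by rw [e1, e2]

lemma zpow_norm_le (z : ℂ) (ρ : ℝ) (hρ : 1 ≤ ρ) (hz : ‖z‖ ≤ ρ) (hz' : ‖z⁻¹‖ ≤ ρ) (j : ℤ) (n : ℕ)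
    (hj : |j| ≤ n) : ‖z^j‖ ≤ ρ^n := by
  have : ∀ w : ℂ, ‖w‖ ≤ ρ → ∀ k : ℕ, k ≤ n → ‖w^k‖ ≤ ρ^n := by
    intro w hw k hk
    rw [norm_pow]
    exact (pow_le_pow_left₀ (norm_nonneg _) hw k).trans (pow_le_pow_right₀ hρ hk)
  obtain ⟨k, rfl | rfl⟩ := j.eq_nat_or_neg
  · rw [zpow_natCast]; exact this z hz k (by simpa using hj)
  · rw [zpow_neg, zpow_natCast, ← inv_pow]; exact this _ hz' k (by simpa using hj)

def Big (t : ℝ) : Set ℂ := {z | t^46 < ‖z‖ ∧ ‖z‖ < (t^46)⁻¹}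

lemma Big_open (t : ℝ) : IsOpen (Big t) :=
  (isOpen_lt continuous_const continuous_norm).inter (isOpen_lt continuous_norm continuous_const)

section
variable {t : ℝ}

lemma Big_ne (ht0 : 0 < t) {z : ℂ} (hz : z ∈ Big t) : z ≠ 0 := by
  rintro rfl
  have := hz.1
  simp at this
  linarith [pow_pos ht0 46]

lemma s_ne (ht0 : 0 < t) : ((t:ℂ))^25 ≠ 0 := pow_ne_zero _ (by exact_mod_cast ht0.ne')

lemma T_norm (ht0 : 0 < t) : ‖(t:ℂ)‖ = t := by simp [abs_of_pos ht0]

lemma s_lt (ht0 : 0 < t) (ht : t ≤ 1/100) : ‖((t:ℂ))^25‖ < 1 := by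
  rw [norm_pow, T_norm ht0]
  exact pow_lt_one₀ ht0.le (by linarith) (by norm_num)

lemma two_le_three_pow (n : ℕ) : (2*n+1 : ℝ) ≤ 3^n := by
  induction n with
  | zero => simp
  | succ k ih => 
    push_cast; rw [pow_succ]
    have : (0:ℝ) ≤ k := by positivity
    nlinarith

lemma phT_bound (ht0 : 0 < t) (ht : t ≤ 1/100) {z : ℂ} (hz : z ∈ Big t) (n : ℕ) :
    ‖phT ((t:ℂ)^25) n z‖ ≤ (3*t)^n := by
  have hρ : 1 ≤ (t^46)⁻¹ := by
    rw [one_le_inv₀ (by positivity)]; exact pow_le_one₀ ht0.le (by linarith)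
  have hz' : ‖z⁻¹‖ ≤ (t^46)⁻¹ := by
    rw [norm_inv]; exact inv_anti₀ (by positivity) hz.1.le
  unfold phT
  rw [norm_mul, norm_mul, norm_pow, norm_pow, norm_pow, T_norm ht0, norm_neg, norm_one, one_pow, one_mul]
  have h1 : ‖∑ k ∈ Finset.range (2*n+1), z^((k:ℤ)-n)‖ ≤ (2*n+1) * ((t^46)⁻¹)^n := by
    refine (norm_sum_le_of_le _ (f := fun k : ℕ => z^((k:ℤ)-n)) (n := fun _ => ((t^46)⁻¹)^n) ?_).trans ?_
    · intro k hk
      rw [Finset.mem_range] at hk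
      apply zpow_norm_le z _ hρ hz.2.le hz'
      rw [abs_le]; omega
    · simp
  have h2 : (t^25)^(n*(n+1)) * ((t^46)⁻¹)^n ≤ t^n := by
    rw [inv_pow, ← div_eq_mul_inv, div_le_iff₀ (by positivity), ← pow_mul, ← pow_mul, ← pow_add]
    apply pow_le_pow_of_le_one ht0.le (by linarith)
    rcases Nat.eq_zero_or_pos n with h | h
    · subst h; simp
    · nlinarith
  calc _ ≤ (t^25)^(n*(n+1)) * ((2*n+1) * ((t^46)⁻¹)^n) := by gcongr
    _ = (2*n+1) * ((t^25)^(n*(n+1)) * ((t^46)⁻¹)^n) := by ring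
    _ ≤ 3^n * t^n := by gcongr; exact two_le_three_pow n
    _ = _ := by rw [mul_pow]

lemma geo_summ (ht0 : 0 < t) (ht : t ≤ 1/100) : Summable (fun n : ℕ => (3*t)^n) :=
  summable_geometric_of_lt_one (by linarith) (by linarith)

lemma ph_diff (ht0 : 0 < t) (ht : t ≤ 1/100) {z : ℂ} (hz : z ∈ Big t) :
    DifferentiableAt ℂ (ph ((t:ℂ)^25)) z := by
  have : DifferentiableOn ℂ (ph ((t:ℂ)^25)) (Big t) := by
    apply Complex.differentiableOn_tsum_of_summable_norm (geo_summ ht0 ht) _ (Big_open t)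
      (fun n w hw => phT_bound ht0 ht hw n)
    intro n w hw
    unfold phT
    apply DifferentiableAt.differentiableWithinAt
    apply DifferentiableAt.const_mul
    apply DifferentiableAt.fun_sum
    intro k _
    exact DifferentiableAt.zpow differentiableAt_id (Or.inl (Big_ne ht0 hw))
  exact this.differentiableAt ((Big_open t).mem_nhds hz)

lemma ph_ne (ht0 : 0 < t) (ht : t ≤ 1/100) {z : ℂ} (hz : z ∈ Big t) :
    ph ((t:ℂ)^25) z ≠ 0 := by
  have hs : Summable (fun n => phT ((t:ℂ)^25) n z) :=
    Summable.of_norm_bounded (geo_summ ht0 ht) (fun n => phT_bound ht0 ht hz n)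
  have h1 : ph ((t:ℂ)^25) z = 1 + ∑' n, phT ((t:ℂ)^25) (n+1) z := by
    unfold ph
    rw [hs.tsum_eq_zero_add]; simp [phT]
  have h2 : HasSum (fun n : ℕ => (3*t)^(n+1)) ((1 - 3*t)⁻¹ * (3*t)) := by
    simp only [pow_succ]
    exact (hasSum_geometric_of_lt_one (by linarith) (by linarith)).mul_right _
  have h3 := tsum_of_norm_bounded h2 (fun n => phT_bound ht0 ht hz (n+1))
  have h4 : (1 - 3*t)⁻¹ * (3*t) < 1 := by
    rw [inv_mul_lt_iff₀ (by linarith)]; linarith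
  intro h
  rw [h1] at h
  have : ∑' n, phT ((t:ℂ)^25) (n+1) z = -1 := by linear_combination h
  rw [this] at h3
  simp at h3
  linarith

lemma ph_inv (ht0 : 0 < t) (ht : t ≤ 1/100) (z : ℂ) (hz : z ≠ 0) :
    ph ((t:ℂ)^25) z⁻¹ = ph ((t:ℂ)^25) z := by
  have h0 := s_ne ht0
  have hs := s_lt ht0 ht
  by_cases h1 : z = 1
  · simp [h1]
  have := th_inv _ z h0 hz
  rw [th_ph _ _ h0 hs hz, th_ph _ _ h0 hs (inv_ne_zero hz)] at this
  have h2 : 1 - z⁻¹ ≠ 0 := by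
    intro h; apply h1
    field_simp at h; linear_combination h
  apply mul_left_cancel₀ h2
  rw [this]; field_simp; ring

lemma th_diff (ht0 : 0 < t) (ht : t ≤ 1/100) {z : ℂ} (hz : z ∈ Big t) :
    DifferentiableAt ℂ (th ((t:ℂ)^25)) z := by
  have h : DifferentiableAt ℂ (fun z => (1 - z) * ph ((t:ℂ)^25) z) z :=
    (by fun_prop : DifferentiableAt ℂ (fun z : ℂ => 1 - z) z).mul (ph_diff ht0 ht hz)
  apply h.congr_of_eventuallyEq
  filter_upwards [(Big_open t).mem_nhds hz] with w hw
  exact th_ph _ _ (s_ne ht0) (s_lt ht0 ht) (Big_ne ht0 hw)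

lemma th_ne (ht0 : 0 < t) (ht : t ≤ 1/100) {z : ℂ} (hz : z ∈ Big t) (h1 : z ≠ 1) :
    th ((t:ℂ)^25) z ≠ 0 := by
  rw [th_ph _ _ (s_ne ht0) (s_lt ht0 ht) (Big_ne ht0 hz)]
  exact mul_ne_zero (sub_ne_zero.2 h1.symm) (ph_ne ht0 ht hz)

/-- derivative at one of functions with an inversion symmetry -/
lemma deriv_sym (f : ℂ → ℂ) (k : ℕ) (hf : DifferentiableAt ℂ f 1)
    (h : ∀ z, z ≠ 0 → f z⁻¹ * z^k = f z) : 2 * deriv f 1 = k * f 1 := by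
  have hd := hf.hasDerivAt
  have h1 : HasDerivAt (fun z : ℂ => f z⁻¹) (deriv f 1 * (-1)) 1 := by
    have hi : HasDerivAt (fun z : ℂ => z⁻¹) (-1) 1 := by
      have := hasDerivAt_inv (x := (1:ℂ)) one_ne_zero
      simpa using this
    have hd' : HasDerivAt f (deriv f 1) ((fun z : ℂ => z⁻¹) 1) := by simpa using hd
    exact hd'.comp 1 hi
  have h2 : HasDerivAt (fun z : ℂ => f z⁻¹ * z^k) (deriv f 1 * (-1) * 1 + f 1 * k) 1 := by
    have := h1.fun_mul (hasDerivAt_pow k (1:ℂ))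
    convert! this using 1
    simp
  have h3 : HasDerivAt f (deriv f 1 * (-1) * 1 + f 1 * k) 1 := by
    apply h2.congr_of_eventuallyEq
    filter_upwards [isOpen_ne.mem_nhds (one_ne_zero (α := ℂ))] with z hz
    exact (h z hz).symm
  have := hd.unique h3
  linear_combination this

end
end OP

namespace OP
open Filter Topology MeasureTheory

section
variable {t : ℝ}

lemma Big_of (ht0 : 0 < t) (ht : t ≤ 1/100) {z : ℂ} (k : ℤ) (h1 : -46 < k) (h2 : k < 46)
    (hz : ‖z‖ = t^k) : z ∈ Big t := by
  have h : t < 1 := by linarith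
  constructor
  · rw [hz, ← zpow_natCast]
    exact zpow_lt_zpow_right_of_lt_one₀ ht0 h h2
  · rw [hz, ← zpow_natCast, ← zpow_neg]
    exact zpow_lt_zpow_right_of_lt_one₀ ht0 h h1

lemma Tc_ne (ht0 : 0 < t) : (t:ℂ) ≠ 0 := by exact_mod_cast ht0.ne'

lemma th_T (ht0 : 0 < t) (z : ℂ) (hz : z ≠ 0) : th ((t:ℂ)^25) (((t:ℂ)^10)^5 * z) = th ((t:ℂ)^25) z⁻¹ := by
  rw [th_inv _ _ (s_ne ht0) hz, ← th_shift _ _ (s_ne ht0) hz]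
  congr 1; ring

lemma Q_norm (ht0 : 0 < t) : ‖(t:ℂ)^10‖ = t^(10:ℤ) := by
  rw [norm_pow, T_norm ht0]; norm_cast

lemma Q2_norm (ht0 : 0 < t) : ‖((t:ℂ)^10)^2‖ = t^(20:ℤ) := by
  rw [norm_pow, norm_pow, T_norm ht0]; norm_cast; ring

lemma ne_one_of_norm (ht0 : 0 < t) (ht : t ≤ 1/100) {z : ℂ} (k : ℤ) (hk : k ≠ 0)
    (hz : ‖z‖ = t^k) : z ≠ 1 := by
  rintro rfl
  rw [norm_one] at hz
  rcases lt_or_gt_of_ne hk with h | h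
  · have := zpow_lt_zpow_right_of_lt_one₀ ht0 (by linarith : t < 1) h
    rw [zpow_zero] at this; linarith
  · have := zpow_lt_zpow_right_of_lt_one₀ ht0 (by linarith : t < 1) h
    rw [zpow_zero] at this; linarith

lemma th_ne_of (ht0 : 0 < t) (ht : t ≤ 1/100) {z : ℂ} (k : ℤ) (h1 : -46 < k) (h2 : k < 46) (h0 : k ≠ 0)
    (hz : ‖z‖ = t^k) : th ((t:ℂ)^25) z ≠ 0 :=
  th_ne ht0 ht (Big_of ht0 ht k h1 h2 hz) (ne_one_of_norm ht0 ht k h0 hz)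

theorem theta_rel (ht0 : 0 < t) (ht : t ≤ 1/100) {T Q s p A B A' B' E a b c : ℂ} (hT : T = t)
    (hQ : Q = T^10) (hs : s = T^25) (hp : p = T^50)
    (hA : A = th s Q) (hB : B = th s (Q^2)) (hA' : A' = th s (-Q)) (hB' : B' = th s (-Q^2))
    (hE : E = th s (-1)) (ha : a = J p (-1)) (hb : b = J p (-Q^2)) (hc : c = J p (-Q^4)) :
    (A ≠ 0 ∧ B ≠ 0 ∧ A' ≠ 0 ∧ B' ≠ 0 ∧ E ≠ 0 ∧ a ≠ 0) ∧
    E*B^2*B' = A*A'*(A*B'+A'*B) ∧ (A'*B-A*B')*B^3*B'^2 = Q*A^3*A'^2*(A*B'+A'*B) ∧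
    2*b*B*B' = a*(A*B'+A'*B) ∧ 2*c*B^3*B'^2 = a*A^2*A'*(A*B'+A'*B) := by
  subst hT
  have hT0 := Tc_ne ht0
  have hQ0 : Q ≠ 0 := by rw [hQ]; exact pow_ne_zero _ hT0
  have hs0 : s ≠ 0 := by rw [hs]; exact s_ne ht0
  have hs1 : ‖s‖ < 1 := by rw [hs]; exact s_lt ht0 ht
  have hps : p = s^2 := by rw [hp, hs]; ring
  have hA0 : A ≠ 0 := by
    rw [hA, hs, hQ]; exact th_ne_of ht0 ht 10 (by norm_num) (by norm_num) (by norm_num) (Q_norm ht0)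
  have hA'0 : A' ≠ 0 := by
    rw [hA', hs, hQ]
    exact th_ne_of ht0 ht 10 (by norm_num) (by norm_num) (by norm_num) (by rw [norm_neg]; exact Q_norm ht0)
  have hB0 : B ≠ 0 := by
    rw [hB, hs, hQ]; exact th_ne_of ht0 ht 20 (by norm_num) (by norm_num) (by norm_num) (Q2_norm ht0)
  have hB'0 : B' ≠ 0 := by
    rw [hB', hs, hQ]
    exact th_ne_of ht0 ht 20 (by norm_num) (by norm_num) (by norm_num) (by rw [norm_neg]; exact Q2_norm ht0)
  have hE0 : E ≠ 0 := by
    rw [hE, hs]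
    exact th_ne ht0 ht (Big_of ht0 ht 0 (by norm_num) (by norm_num) (by simp)) (by norm_num)
  have sh : ∀ z, z ≠ 0 → th s (Q^5 * z) = th s z⁻¹ := by
    intro z hz; rw [hs, hQ]; exact th_T ht0 z hz
  have t3 : th s (Q^3) = B := by
    have := sh (Q^2)⁻¹ (by simp [hQ0]); rw [inv_inv, ← hB] at this; rw [← this]; congr 1; field_simp
  have t3' : th s (-Q^3) = B' := by
    have := sh (-Q^2)⁻¹ (by simp [hQ0]); rw [inv_inv, ← hB'] at this; rw [← this]; congr 1; field_simp
  have t4 : th s (Q^4) = A := by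
    have := sh (Q)⁻¹ (by simp [hQ0]); rw [inv_inv, ← hA] at this; rw [← this]; congr 1; field_simp
  have Jz : J (s^2) (-(s^2*1^2)) = 0 := by rw [one_pow, mul_one]; exact J_zero _ (pow_ne_zero _ hs0)
  obtain ⟨G1, hG1⟩ : ∃ G1, G1 = J (s^2) (-(s^2*Q^2)) := ⟨_, rfl⟩
  obtain ⟨G2, hG2⟩ : ∃ G2, G2 = J (s^2) (-(s^2*(Q^2)^2)) := ⟨_, rfl⟩
  rw [hps] at ha hb hc
  rw [show -Q^4 = -(Q^2)^2 by ring] at hc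
  have hn : ∀ z : ℂ, (-z)^2 = z^2 := fun z => neg_sq z
  have r1 := th_add s Q 1 hs0 hs1 hQ0 one_ne_zero
  rw [Jz, ← hG1, one_pow, ← ha, mul_one, div_one, ← hA, ← hA'] at r1
  have r2 := th_add s (Q^2) 1 hs0 hs1 (pow_ne_zero _ hQ0) one_ne_zero
  rw [Jz, ← hG2, one_pow, ← ha, mul_one, div_one, ← hB, ← hB'] at r2
  have r3 := th_add s Q (-Q) hs0 hs1 hQ0 (neg_ne_zero.2 hQ0)
  rw [hn, ← hG1, ← hb, show Q / -Q = -1 by field_simp, ← hE, show -(Q * -Q) = Q^2 by ring, ← hB] at r3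
  have r4 := th_add s (Q^2) (-Q^2) hs0 hs1 (pow_ne_zero _ hQ0) (neg_ne_zero.2 (pow_ne_zero _ hQ0))
  rw [hn, ← hG2, ← hc, show Q^2 / -Q^2 = -1 by field_simp, ← hE, show -(Q^2 * -Q^2) = Q^4 by ring, t4] at r4
  have r5 := th_add s (Q^2) (-Q) hs0 hs1 (pow_ne_zero _ hQ0) (neg_ne_zero.2 hQ0)
  rw [hn, ← hG2, ← hc, ← hb, ← hG1, show Q^2 / -Q = -Q by field_simp, ← hA', show -(Q^2 * -Q) = Q^3 by ring, t3] at r5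
  have r6 := th_add s (Q^2) (Q) hs0 hs1 (pow_ne_zero _ hQ0) (hQ0)
  rw [← hG2, ← hc, ← hb, ← hG1, show Q^2 / Q = Q by field_simp, ← hA, show -(Q^2 * Q) = -Q^3 by ring, t3'] at r6
  obtain ⟨g1, hg1⟩ : ∃ g1, g1 = -Q^2 * G1 := ⟨_, rfl⟩
  obtain ⟨g2, hg2⟩ : ∃ g2, g2 = -(Q^2)^2 * G2 := ⟨_, rfl⟩
  have q1 : A'*A = a*g1 := by rw [r1, hg1]; ring
  have q2 : B'*B = a*g2 := by rw [r2, hg2]; ring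
  have q3 : B*E = 2*b*g1 := by rw [r3, hg1]; ring
  have q4 : A*E = 2*c*g2 := by rw [r4, hg2]; ring
  have q5 : B*A' = b*g2+Q*c*g1 := by rw [r5, hg2, hg1]; ring
  have q6 : B'*A = b*g2-Q*c*g1 := by rw [r6, hg2, hg1]; ring
  have h22 : a * g2 ≠ 0 := by rw [← q2]; exact mul_ne_zero hB'0 hB0
  have ha0 := left_ne_zero_of_mul h22
  have hg0 := right_ne_zero_of_mul h22
  have k5 : A*B'+A'*B = 2*b*g2 := by linear_combination q5 + q6
  have k6 : A'*B-A*B' = 2*Q*c*g1 := by linear_combination q5 - q6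
  have c1 : E*B^2*B' = A*A'*(A*B'+A'*B) := by
    linear_combination (B'*B)*q3 + 2*b*g1*q2 - (A*B'+A'*B)*q1 - a*g1*k5
  have c3 : 2*c*B^3*B'^2 = a*A^2*A'*(A*B'+A'*B) := by
    apply mul_left_cancel₀ hg0
    linear_combination -B^3*B'^2*q4 + A*B*B'*c1 + A^2*A'*(A*B'+A'*B)*q2
  refine ⟨⟨hA0, hB0, hA'0, hB'0, hE0, ha0⟩, c1, ?_, ?_, c3⟩
  · linear_combination B^3*B'^2*k6 + Q*g1*c3 - Q*A^2*A'*(A*B'+A'*B)*q1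
  · linear_combination 2*b*q2 - a*k5

lemma J_neg_one (x Q p : ℂ) (h0 : x ≠ 0) (hx : ‖x‖ < 1) (hQ : x^5 = Q) (hp : p = Q^5) :
    J x (-1) = J p (-1) - 2*x*J p (-Q^2) + 2*x^4*J p (-Q^4) := by
  have hQ0 : Q ≠ 0 := by rw [← hQ]; exact pow_ne_zero _ h0
  have h := J_split5 x (-1) h0 hx (by norm_num)
  rw [show x^25 = p by rw [hp, ← hQ]; ring, show x^10 = Q^2 by rw [← hQ]; ring] at h
  rw [h]
  rw [show ((-1:ℂ))^5 = -1 by norm_num,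
    show (-1:ℂ) * ((Q^2)⁻¹)^2 = (-Q^4)⁻¹ by field_simp, show (-1:ℂ) * (Q^2)⁻¹ = (-Q^2)⁻¹ by field_simp,
    J_inv, J_inv, show (-1:ℂ) * Q^2 = -Q^2 by ring, show (-1:ℂ) * (Q^2)^2 = -Q^4 by ring]
  norm_num
  ring
end
end OP

namespace OP
open Filter Topology MeasureTheory

noncomputable def UT (p y : ℂ) (m : ℤ) (z : ℂ) : ℂ :=
  (-1)^m * p^(m^2) * z^(2*m) * y^m / (1 - z * p^m)

noncomputable def UU (p y z : ℂ) : ℂ := ∑' m : ℤ, UT p y m z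

noncomputable def UTr (p y : ℂ) (m : ℤ) (z : ℂ) : ℂ := if m = 0 then 0 else UT p y m z

noncomputable def Ureg (p y z : ℂ) : ℂ := ∑' m : ℤ, UTr p y m z

lemma UT_shift (p y z : ℂ) (hp : p ≠ 0) (hy : y ≠ 0) (hz : z ≠ 0) (m : ℤ) :
    UT p y m (p*z) = - UT p y (m+1) z / (p * y * z^2) := by
  unfold UT
  rw [show p * z * p^m = z * p^(m+1) by rw [zpow_add₀ hp, zpow_one]; ring]
  rw [show (m+1)^2 = m^2 + 2*m + 1 by ring, show 2*(m+1) = 2*m + 2 by ring, zpow_add₀ hz, zpow_add₀ hy,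
    zpow_add₀ (by norm_num : (-1:ℂ) ≠ 0) m 1, zpow_add₀ hp (m^2+2*m) 1, zpow_add₀ hp (m^2) (2*m), mul_zpow, zpow_one, zpow_one, zpow_one,
    show z^(2:ℤ) = z^2 by norm_cast]
  generalize 1 - z * p^(m+1) = d
  field_simp

lemma UU_shift (p y z : ℂ) (hp : p ≠ 0) (hy : y ≠ 0) (hz : z ≠ 0) :
    UU p y (p*z) = - UU p y z / (p * y * z^2) := by
  unfold UU
  simp only [UT_shift p y z hp hy hz]
  rw [tsum_div_const, tsum_neg, ← (Equiv.addRight (1:ℤ)).tsum_eq (fun m => UT p y m z)]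
  rfl

section
variable {t : ℝ}

def Ann (t : ℝ) : Set ℂ := {z | t^26 < ‖z‖ ∧ ‖z‖ < (t^26)⁻¹}

lemma Ann_open (t : ℝ) : IsOpen (Ann t) :=
  (isOpen_lt continuous_const continuous_norm).inter (isOpen_lt continuous_norm continuous_const)

lemma Ann_ne (ht0 : 0 < t) {z : ℂ} (hz : z ∈ Ann t) : z ≠ 0 := by
  rintro rfl
  have := hz.1
  simp at this
  linarith [pow_pos ht0 26]

lemma rzpow_le (w r : ℝ) (hr : 0 < r) (h1 : r ≤ w) (h2 : w ≤ r⁻¹) (m : ℤ) :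
    w^m ≤ r^m + (r⁻¹)^m := by
  have hw : 0 < w := by linarith
  obtain ⟨k, rfl | rfl⟩ := m.eq_nat_or_neg
  · simp only [zpow_natCast]
    have := pow_le_pow_left₀ hw.le h2 k
    have : 0 < r^k := by positivity
    linarith
  · simp only [zpow_neg, zpow_natCast]
    have := inv_anti₀ (by positivity) (pow_le_pow_left₀ hr.le h1 k)
    have : 0 < (r⁻¹^k)⁻¹ := by positivity
    linarith

lemma UT_den (ht0 : 0 < t) (ht : t ≤ 1/100) {z : ℂ} (hz : z ∈ Ann t) (m : ℤ) (hm : m ≠ 0) :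
    ‖z * ((t:ℂ)^50)^m‖ ≤ 1/2 ∨ 2 ≤ ‖z * ((t:ℂ)^50)^m‖ := by
  have h1 : t < 1 := by linarith
  rw [norm_mul, norm_zpow, norm_pow, T_norm ht0]
  have e : t^26 * t ≤ (1/2) * t^26 := by nlinarith [pow_pos ht0 26]
  rcases lt_or_gt_of_ne hm with h | h
  · right
    have h2 : (t^50)^(-1:ℤ) ≤ (t^50)^m :=
      zpow_le_zpow_right_of_le_one₀ (by positivity) (pow_le_one₀ ht0.le h1.le) (by omega)
    have h3 : t^26 * (t^50)⁻¹ ≤ ‖z‖ * (t^50)^m := by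
      rw [zpow_neg_one] at h2
      gcongr
      exact hz.1.le
    refine le_trans ?_ h3
    rw [← div_eq_mul_inv, le_div_iff₀ (by positivity)]
    have : t^50 = t^26 * t^24 := by ring
    have : t^24 ≤ t^1 := pow_le_pow_of_le_one ht0.le h1.le (by norm_num)
    nlinarith [pow_pos ht0 26]
  · left
    have h2 : (t^50)^m ≤ (t^50)^(1:ℤ) :=
      zpow_le_zpow_right_of_le_one₀ (by positivity) (pow_le_one₀ ht0.le h1.le) (by omega)
    have h3 : ‖z‖ * (t^50)^m ≤ (t^26)⁻¹ * t^50 := by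
      rw [zpow_one] at h2
      gcongr
      exact hz.2.le
    refine h3.trans ?_
    rw [inv_mul_le_iff₀ (by positivity)]
    have : t^50 = t^26 * t^24 := by ring
    have : t^24 ≤ t^1 := pow_le_pow_of_le_one ht0.le h1.le (by norm_num)
    nlinarith [pow_pos ht0 26]

noncomputable def ub (t : ℝ) (m : ℤ) : ℝ := 2 * ((t^50)^(m^2) * ((t^72)^m + ((t^72)⁻¹)^m))

lemma ub_nonneg (ht0 : 0 < t) (m : ℤ) : 0 ≤ ub t m := by unfold ub; positivity

lemma ub_summ (ht0 : 0 < t) (ht : t ≤ 1/100) : Summable (ub t) := by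
  have hT := Tc_ne ht0
  have hn : ‖(t:ℂ)^50‖ < 1 := by
    rw [norm_pow, T_norm ht0]; exact pow_lt_one₀ ht0.le (by linarith) (by norm_num)
  have h1 := (summ_J ((t:ℂ)^50) ((t:ℂ)^72) (pow_ne_zero _ hT) hn (pow_ne_zero _ hT)).norm
  have h2 := (summ_J ((t:ℂ)^50) ((t:ℂ)^72)⁻¹ (pow_ne_zero _ hT) hn (inv_ne_zero (pow_ne_zero _ hT))).norm
  refine ((h1.add h2).mul_left 2).congr ?_
  intro m
  unfold ub
  simp only [norm_mul, norm_zpow, norm_pow, norm_inv, T_norm ht0]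
  ring

lemma UT_bound (ht0 : 0 < t) (ht : t ≤ 1/100) {z y : ℂ} (hz : z ∈ Ann t)
    (hy1 : t^20 ≤ ‖y‖) (hy2 : ‖y‖ ≤ 1) (m : ℤ) (hm : m ≠ 0) :
    ‖UT ((t:ℂ)^50) y m z‖ ≤ ub t m := by
  unfold UT ub
  rw [div_eq_mul_inv, norm_mul]
  have h1 := denom_bound _ (UT_den ht0 ht hz m hm)
  have h2 : ‖(-1)^m * ((t:ℂ)^50)^(m^2) * z^(2*m) * y^m‖ = (t^50)^(m^2) * (‖z‖^2*‖y‖)^m := by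
    simp only [norm_mul, norm_zpow, norm_pow, T_norm ht0, norm_neg, norm_one, one_zpow]
    rw [mul_zpow, zpow_mul]; norm_cast; ring
  rw [h2, mul_comm 2]
  have hzp : 0 < ‖z‖ := norm_pos_iff.2 (Ann_ne ht0 hz)
  have a1 : (t^26)^2 ≤ ‖z‖^2 := by gcongr; exact hz.1.le
  have a2 : ‖z‖^2 ≤ ((t^26)⁻¹)^2 := by gcongr; exact hz.2.le
  gcongr
  · apply rzpow_le _ _ (by positivity)
    · calc t^72 = (t^26)^2 * t^20 := by ring
        _ ≤ _ := by gcongr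
    · calc ‖z‖^2*‖y‖ ≤ ((t^26)⁻¹)^2 * 1 := by gcongr
        _ = (t^52)⁻¹ := by rw [inv_pow]; ring
        _ ≤ _ := by
          apply inv_anti₀ (by positivity)
          exact pow_le_pow_of_le_one ht0.le (by linarith) (by norm_num)

lemma UTr_bound (ht0 : 0 < t) (ht : t ≤ 1/100) {z y : ℂ} (hz : z ∈ Ann t)
    (hy1 : t^20 ≤ ‖y‖) (hy2 : ‖y‖ ≤ 1) (m : ℤ) :
    ‖UTr ((t:ℂ)^50) y m z‖ ≤ ub t m := by
  unfold UTr
  split_ifs with h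
  · simpa using ub_nonneg ht0 m
  · exact UT_bound ht0 ht hz hy1 hy2 m h

lemma Ureg_diff (ht0 : 0 < t) (ht : t ≤ 1/100) {y : ℂ}
    (hy1 : t^20 ≤ ‖y‖) (hy2 : ‖y‖ ≤ 1) : DifferentiableOn ℂ (Ureg ((t:ℂ)^50) y) (Ann t) := by
  apply Complex.differentiableOn_tsum_of_summable_norm (ub_summ ht0 ht) _ (Ann_open t)
    (fun n w hw => UTr_bound ht0 ht hw hy1 hy2 n)
  intro m z hz
  apply DifferentiableAt.differentiableWithinAt
  unfold UTr
  split_ifs with h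
  · exact differentiableAt_const _
  · unfold UT
    have hd : 1 - z * ((t:ℂ)^50)^m ≠ 0 := by
      intro h0
      have := UT_den ht0 ht hz m h
      rw [← sub_eq_zero.1 h0] at this
      norm_num at this
    have hzp : DifferentiableAt ℂ (fun z : ℂ => z^(2*m)) z :=
      DifferentiableAt.zpow differentiableAt_id (Or.inl (Ann_ne ht0 hz))
    fun_prop (disch := exact hd)

lemma UU_eq (ht0 : 0 < t) (ht : t ≤ 1/100) {z y : ℂ} (hz : z ∈ Ann t)
    (hy1 : t^20 ≤ ‖y‖) (hy2 : ‖y‖ ≤ 1) :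
    Summable (fun m => UT ((t:ℂ)^50) y m z) ∧
    UU ((t:ℂ)^50) y z = Ureg ((t:ℂ)^50) y z + (1 - z)⁻¹ := by
  have hs : Summable (fun m => UTr ((t:ℂ)^50) y m z) :=
    Summable.of_norm_bounded (ub_summ ht0 ht) (fun m => UTr_bound ht0 ht hz hy1 hy2 m)
  have h0 : HasSum (fun m : ℤ => if m = 0 then (1 - z)⁻¹ else 0) (1-z)⁻¹ := hasSum_ite_eq 0 _
  have := hs.hasSum.add h0
  have he : (fun m : ℤ => UTr ((t:ℂ)^50) y m z + if m = 0 then (1 - z)⁻¹ else 0) = fun m => UT ((t:ℂ)^50) y m z := by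
    ext m
    unfold UTr
    split_ifs with h
    · subst h; simp [UT]
    · simp
  rw [he] at this
  exact ⟨this.summable, this.tsum_eq⟩

theorem appell (ht0 : 0 < t) (ht : t ≤ 1/100) {y : ℂ} (hy1 : t^20 ≤ ‖y‖) (hy2 : ‖y‖ ≤ 1)
    (f : ℂ → ℂ) (hf : ∀ z ∈ Ann t, DifferentiableAt ℂ f z) (hf1 : f 1 = 1)
    (hfe : ∀ z ∈ Ann t, (t:ℂ)^50 * z ∈ Ann t → z ≠ 1 → (t:ℂ)^50 * z ≠ 1 →
      f ((t:ℂ)^50 * z) / (1 - (t:ℂ)^50 * z) = - (f z / (1 - z)) / ((t:ℂ)^50 * y * z^2)) :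
    ∃ c0 c1 : ℂ, ∀ z : ℂ, t^25 ≤ ‖z‖ → ‖z‖ ≤ (t^25)⁻¹ →
      UU ((t:ℂ)^50) y z = (if z = 1 then - deriv f 1 else f z / (1 - z)) +
        (c0 * J ((t:ℂ)^50) (-(z^2*y)) + c1 * (z * J ((t:ℂ)^50) (-((t:ℂ)^50*z^2*y)))) := by
  have hy : y ≠ 0 := norm_pos_iff.1 (lt_of_lt_of_le (by positivity) hy1)
  have hp0 : (t:ℂ)^50 ≠ 0 := pow_ne_zero _ (Tc_ne ht0)
  have h1A : (1:ℂ) ∈ Ann t := by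
    constructor
    · simpa using pow_lt_one₀ ht0.le (by linarith) (by norm_num)
    · simpa using (one_lt_inv₀ (by positivity)).2 (pow_lt_one₀ ht0.le (by linarith : t < 1) (by norm_num : 26 ≠ 0))
  set D : ℂ → ℂ := fun z => Ureg ((t:ℂ)^50) y z + dslope f 1 z with hDdef
  have hDne : ∀ z ∈ Ann t, z ≠ 1 → UU ((t:ℂ)^50) y z = f z / (1 - z) + D z := by
    intro z hz h1
    have h1' : 1 - z ≠ 0 := sub_ne_zero.2 h1.symm
    have h1'' : z - 1 ≠ 0 := sub_ne_zero.2 h1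
    rw [(UU_eq ht0 ht hz hy1 hy2).2, hDdef]
    simp only
    rw [dslope_of_ne _ h1, slope_def_field, hf1]
    rw [show z - 1 = -(1 - z) by ring]
    field_simp; ring
  have hD1 : UU ((t:ℂ)^50) y 1 = - deriv f 1 + D 1 := by
    rw [(UU_eq ht0 ht h1A hy1 hy2).2, hDdef]
    simp
  have hDd : ∀ z : ℂ, t^26 < ‖z‖ → ‖z‖ < (t^26)⁻¹ → DifferentiableAt ℂ D z := by
    intro z a b
    have hz : z ∈ Ann t := ⟨a, b⟩
    have hn := (Ann_open t).mem_nhds hz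
    apply DifferentiableAt.add
    · exact (Ureg_diff ht0 ht hy1 hy2).differentiableAt hn
    · have : DifferentiableOn ℂ (dslope f 1) (Ann t) :=
        (Complex.differentiableOn_dslope ((Ann_open t).mem_nhds h1A)).2
          (fun w hw => (hf w hw).differentiableWithinAt)
      exact this.differentiableAt hn
  have e1 : t^50 * (t^25)⁻¹ = t^25 := by field_simp
  have h26 : t^26 < t^25 := pow_lt_pow_right_of_lt_one₀ ht0 (by linarith) (by norm_num)
  have h26' : (t^25)⁻¹ < (t^26)⁻¹ := inv_strictAnti₀ (by positivity) h26
  have h25 : t^25 < 1 := pow_lt_one₀ ht0.le (by linarith) (by norm_num)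
  have h25' : 1 < (t^25)⁻¹ := (one_lt_inv₀ (by positivity)).2 h25
  obtain ⟨c0, c1, hc⟩ := laurent_main D (t^26) ((t^26)⁻¹) (t^50) ((t^25)⁻¹) (by positivity) (by positivity)
    (pow_lt_one₀ ht0.le (by linarith) (by norm_num)) (by rw [e1]; exact h26) h26' hDd y hy (by
      intro z hz
      push_cast
      have hz0 : z ≠ 0 := by
        intro h; rw [h, norm_zero] at hz; linarith
      have hpz : ‖(t:ℂ)^50 * z‖ = t^25 := by
        rw [norm_mul, norm_pow, T_norm ht0, hz, e1]
      have m1 : z ∈ Ann t := ⟨by rw [hz]; linarith, by rw [hz]; linarith⟩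
      have m2 : (t:ℂ)^50 * z ∈ Ann t := ⟨by rw [hpz]; linarith, by rw [hpz]; linarith⟩
      have n1 : z ≠ 1 := by rintro rfl; rw [norm_one] at hz; linarith
      have n2 : (t:ℂ)^50 * z ≠ 1 := by intro h; rw [h, norm_one] at hpz; linarith
      have k1 := hDne _ m1 n1
      have k2 := hDne _ m2 n2
      have k3 := UU_shift _ y z hp0 hy hz0
      have k4 := hfe z m1 m2 n1 n2
      rw [show D ((t:ℂ)^50*z) = UU ((t:ℂ)^50) y ((t:ℂ)^50*z) - f ((t:ℂ)^50*z) / (1 - (t:ℂ)^50*z) by rw [k2]; ring,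
        show D z = UU ((t:ℂ)^50) y z - f z / (1 - z) by rw [k1]; ring, k3, k4]
      ring)
  refine ⟨c0, c1, ?_⟩
  intro z a b
  have hc' := hc z (by rw [e1]; exact a) b
  push_cast at hc'
  rw [← hc']
  split_ifs with h
  · rw [h, hD1]
  · exact hDne z ⟨by linarith, by linarith⟩ h

end
end OP

namespace OP
open Filter Topology MeasureTheory

lemma SA_split (b : ℤ) (x Q p : ℂ) (h0 : x ≠ 0) (hx : ‖x‖ ≤ 1/10) (hQ : Q = x^5) (hp : p = Q^5) :
    SA b x = x^(4-2*b) * UU p (Q^b) (Q^2)⁻¹ - x^(1-b) * UU p (Q^b) Q⁻¹ + UU p (Q^b) 1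
      - x^(1+b) * UU p (Q^b) Q + x^(4+2*b) * UU p (Q^b) (Q^2) := by
  have hQ0 : Q ≠ 0 := by rw [hQ]; exact pow_ne_zero _ h0
  have key : ∀ r : ℤ, (∑' m : ℤ, (-1)^(5*m+r) * x^((5*m+r)^2 + b*(5*m+r)) / (1 - x^(5*(5*m+r)))) =
      (-1)^r * x^(r^2+b*r) * UU p (Q^b) (Q^r) := by
    intro r
    unfold UU
    rw [← tsum_mul_left]
    apply tsum_congr
    intro m
    unfold UT
    have e1 : (-1:ℂ)^(5*m+r) = (-1)^m * (-1)^r := by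
      rw [zpow_add₀ (by norm_num), zpow_mul]; norm_num
    have hQz : ∀ k : ℤ, Q^k = x^(5*k) := by
      intro k; rw [zpow_mul, hQ]; norm_cast
    have hpz : ∀ k : ℤ, p^k = x^(25*k) := by
      intro k; rw [zpow_mul, hp, hQ]; norm_cast; ring
    have e2 : x^((5*m+r)^2 + b*(5*m+r)) = x^(r^2+b*r) * (p^(m^2) * (Q^r)^(2*m) * (Q^b)^m) := by
      rw [← zpow_mul, ← zpow_mul, hpz, hQz, hQz, ← zpow_add₀ h0, ← zpow_add₀ h0, ← zpow_add₀ h0]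
      congr 1; ring
    have e3 : x^(5*(5*m+r)) = Q^r * p^m := by
      rw [hpz, hQz, ← zpow_add₀ h0]; congr 1; ring
    rw [e1, e2, e3]
    ring
  unfold SA
  rw [tsum_split5 _ (SA_summ b h0 hx), key, key, key, key, key]
  have e2 : Q^(-2:ℤ) = (Q^2)⁻¹ := by rw [zpow_neg]; norm_cast
  have e3 : Q^(2:ℤ) = Q^2 := by norm_cast
  rw [e2, e3, zpow_neg_one, zpow_zero, zpow_one]
  norm_num
  rw [show 4 + -(b*2) = 4 - 2*b by ring, show 1 + -b = 1 - b by ring, show 4 + b*2 = 4+2*b by ring]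
  ring

section
variable {t : ℝ}

lemma SA_comb (ht0 : 0 < t) (ht : t ≤ 1/100) (b : ℕ) (Q p : ℂ) (hQ : Q = (t:ℂ)^10) (hp : p = (t:ℂ)^50)
    (K : ℂ → ℂ) (c0 c1 : ℂ)
    (hU : ∀ z : ℂ, t^25 ≤ ‖z‖ → ‖z‖ ≤ (t^25)⁻¹ → UU p (Q^b) z = K z +
      (c0 * J p (-(z^2*Q^b)) + c1 * (z * J p (-(p*z^2*Q^b)))))
    (x : ℂ) (h0 : x ≠ 0) (hx : ‖x‖ ≤ 1/10) (hxQ : Q = x^5) :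
    SA b x = x^(4-2*(b:ℤ)) * K (Q^2)⁻¹ - x^(1-(b:ℤ)) * K Q⁻¹ + K 1
      - x^(1+b) * K Q + x^(4+2*b) * K (Q^2) + c0 * J x (-x^b) + c1 * J x (-x^(b+5)) := by
  have hpQ : p = Q^5 := by rw [hp, hQ]; ring
  have hQ0 : Q ≠ 0 := by rw [hxQ]; exact pow_ne_zero _ h0
  have ht1 : t ≤ 1 := by linarith
  have hle : ∀ k : ℕ, k ≤ 25 → t^25 ≤ t^k := fun k hk => pow_le_pow_of_le_one ht0.le ht1 hk
  have hl1 : ∀ k : ℕ, t^k ≤ 1 := fun k => pow_le_one₀ ht0.le ht1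
  have hl2 : 1 ≤ (t^25)⁻¹ := (one_le_inv₀ (by positivity)).2 (hl1 25)
  have nQ : ‖Q‖ = t^10 := by rw [hQ, norm_pow, T_norm ht0]
  have nQ2 : ‖Q^2‖ = t^20 := by rw [norm_pow, nQ]; ring
  have hi : ∀ k : ℕ, k ≤ 25 → t^25 ≤ (t^k)⁻¹ ∧ (t^k)⁻¹ ≤ (t^25)⁻¹ := fun k hk =>
    ⟨(hl1 25).trans ((one_le_inv₀ (by positivity)).2 (hl1 k)), inv_anti₀ (by positivity) (hle k hk)⟩
  rw [SA_split b x Q p h0 hx hxQ hpQ]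
  simp only [zpow_natCast]
  rw [hU _ (by rw [norm_inv, nQ2]; exact (hi 20 (by norm_num)).1) (by rw [norm_inv, nQ2]; exact (hi 20 (by norm_num)).2),
    hU _ (by rw [norm_inv, nQ]; exact (hi 10 (by norm_num)).1) (by rw [norm_inv, nQ]; exact (hi 10 (by norm_num)).2),
    hU 1 (by rw [norm_one]; exact hl1 25) (by rw [norm_one]; exact hl2),
    hU Q (by rw [nQ]; exact hle _ (by norm_num)) (by rw [nQ]; exact (hl1 _).trans hl2),
    hU (Q^2) (by rw [nQ2]; exact hle _ (by norm_num)) (by rw [nQ2]; exact (hl1 _).trans hl2)]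
  have hxb : x^b ≠ 0 := pow_ne_zero _ h0
  have hQb : Q^b = (x^b)^5 := by rw [hxQ, ← pow_mul, ← pow_mul, mul_comm]
  have s1 := J_split5 x (-x^b) h0 (by linarith) (neg_ne_zero.2 hxb)
  have s2 := J_split5 x (-x^(b+5)) h0 (by linarith) (neg_ne_zero.2 (pow_ne_zero _ h0))
  have hp25 : x^25 = p := by rw [hpQ, hxQ]; ring
  have hx10 : x^10 = Q^2 := by rw [hxQ]; ring
  rw [hp25, hx10] at s1 s2
  have q1 : (-x^b)^5 = -Q^b := by rw [hQb]; ring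
  have q2 : (-x^(b+5))^5 = -(p * Q^b) := by rw [hQb, ← hp25]; ring
  rw [q1] at s1
  rw [q2] at s2
  rw [s1, s2]
  have z1 : x^(4-2*(b:ℤ)) = x^4 * (x^b)⁻¹^2 := by
    rw [zpow_sub₀ h0, mul_comm 2, zpow_mul, zpow_natCast]; norm_cast; simp [div_eq_mul_inv]
  have z2 : x^(1-(b:ℤ)) = x * (x^b)⁻¹ := by
    rw [zpow_sub₀ h0, zpow_natCast, zpow_one]; simp [div_eq_mul_inv]
  have z3 : x^(1+(b:ℤ)) = x^(1+b) := by norm_cast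
  have z4 : x^(4+2*(b:ℤ)) = x^(4+2*b) := by norm_cast
  rw [z1, z2, z3, z4]
  have a1 : -((Q^2)⁻¹^2 * Q^b) = -Q^b * (Q^2)⁻¹^2 := by ring
  have a2 : -(p * (Q^2)⁻¹^2 * Q^b) = -(p*Q^b) * (Q^2)⁻¹^2 := by ring
  have a3 : -(Q⁻¹^2 * Q^b) = -Q^b * (Q^2)⁻¹ := by rw [inv_pow]; ring
  have a4 : -(p * Q⁻¹^2 * Q^b) = -(p*Q^b) * (Q^2)⁻¹ := by rw [inv_pow]; ring
  have a5 : -(1^2 * Q^b) = -Q^b := by ring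
  have a6 : -(p * 1^2 * Q^b) = -(p*Q^b) := by ring
  have a7 : -(Q^2 * Q^b) = -Q^b * Q^2 := by ring
  have a8 : -(p * Q^2 * Q^b) = -(p*Q^b) * Q^2 := by ring
  have a9 : -((Q^2)^2 * Q^b) = -Q^b * (Q^2)^2 := by ring
  have a10 : -(p * (Q^2)^2 * Q^b) = -(p*Q^b) * (Q^2)^2 := by ring
  rw [a1, a2, a3, a4, a5, a6, a7, a8, a9, a10]
  have w1 : (-x^(b+5))⁻¹ = -((x^b)⁻¹ * Q⁻¹) := by rw [pow_add, ← hxQ, inv_neg, mul_inv]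
  have w2 : -x^(b+5) = -(x^b*Q) := by rw [pow_add, ← hxQ]
  have w3 : (-x^b)⁻¹ = -(x^b)⁻¹ := inv_neg
  rw [w1, w2, w3]
  generalize J p (-Q^b * (Q^2)⁻¹^2) = j1
  generalize J p (-(p*Q^b) * (Q^2)⁻¹^2) = j2
  generalize J p (-Q^b * (Q^2)⁻¹) = j3
  generalize J p (-(p*Q^b) * (Q^2)⁻¹) = j4
  generalize J p (-Q^b) = j5
  generalize J p (-(p*Q^b)) = j6
  generalize J p (-Q^b * (Q^2)) = j7
  generalize J p (-(p*Q^b) * (Q^2)) = j8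
  generalize J p (-Q^b * (Q^2)^2) = j9
  generalize J p (-(p*Q^b) * (Q^2)^2) = j10
  rw [show x^(1+b) = x * x^b by ring, show x^(4+2*b) = x^4 * (x^b)^2 by ring, inv_pow Q 2 |>.symm]
  ring

end

lemma J_x1 (x : ℂ) (h0 : x ≠ 0) : J x (-x^1) = 0 := by rw [pow_one]; exact J_zero x h0

lemma J_x2 (x : ℂ) (h0 : x ≠ 0) : J x (-x^2) = -x⁻¹ * J x (-1) := by
  rw [show -x^2 = x^2 * (-1) by ring, J_shift x (-1) h0 (by norm_num)]
  congr 1; field_simp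

lemma J_x6 (x : ℂ) (h0 : x ≠ 0) : J x (-x^6) = -(x^9)⁻¹ * J x (-1) := by
  rw [show -x^6 = x^2 * (-x^4) by ring, J_shift x _ h0 (by simp [h0]),
    show -x^4 = x^2 * (-x^2) by ring, J_shift x _ h0 (by simp [h0]), J_x2 x h0]
  field_simp

lemma J_x7 (x : ℂ) (h0 : x ≠ 0) : J x (-x^7) = 0 := by
  rw [show -x^7 = x^2 * (-x^5) by ring, J_shift x _ h0 (by simp [h0]),
    show -x^5 = x^2 * (-x^3) by ring, J_shift x _ h0 (by simp [h0]),
    show -x^3 = x^2 * (-x) by ring, J_shift x _ h0 (by simp [h0]), J_zero x h0]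
  simp

end OP

namespace OP
open Filter Topology MeasureTheory

section
variable {t : ℝ}

lemma Ann_mul_Big (ht0 : 0 < t) (ht : t ≤ 1/100) {z w : ℂ} (hz : z ∈ Ann t) (k : ℤ) (h1 : -20 ≤ k)
    (h2 : k ≤ 20) (hw : ‖w‖ = t^k) : z * w ∈ Big t := by
  have e1 : t^(20:ℤ) ≤ ‖w‖ := by
    rw [hw]; exact zpow_le_zpow_right_of_le_one₀ ht0 (by linarith) h2
  have e2 : ‖w‖ ≤ t^(-20:ℤ) := by
    rw [hw]; exact zpow_le_zpow_right_of_le_one₀ ht0 (by linarith) h1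
  have e3 : t^(-20:ℤ) = (t^20)⁻¹ := by rw [zpow_neg]; norm_cast
  rw [e3] at e2
  have e1' : t^20 ≤ ‖w‖ := by exact_mod_cast e1
  have hwp : 0 < ‖w‖ := lt_of_lt_of_le (by positivity) e1'
  constructor
  · rw [norm_mul]
    calc t^46 = t^26 * t^20 := by ring
      _ ≤ t^26 * ‖w‖ := by gcongr
      _ < _ := by gcongr; exact hz.1
  · rw [norm_mul]
    calc ‖z‖ * ‖w‖ < (t^26)⁻¹ * ‖w‖ := by gcongr; exact hz.2
      _ ≤ (t^26)⁻¹ * (t^20)⁻¹ := by gcongr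
      _ = (t^46)⁻¹ := by rw [← mul_inv]; congr 1; ring

lemma one_Ann (ht0 : 0 < t) (ht : t ≤ 1/100) : (1:ℂ) ∈ Ann t := by
  constructor
  · simpa using pow_lt_one₀ ht0.le (by linarith) (by norm_num)
  · simpa using (one_lt_inv₀ (by positivity)).2 (pow_lt_one₀ ht0.le (by linarith : t < 1) (by norm_num : 26 ≠ 0))

lemma th_mul_diff (ht0 : 0 < t) (ht : t ≤ 1/100) {z w : ℂ} (hz : z ∈ Ann t) (k : ℤ) (h1 : -20 ≤ k)
    (h2 : k ≤ 20) (hw : ‖w‖ = t^k) : DifferentiableAt ℂ (fun z => th ((t:ℂ)^25) (z * w)) z := by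
  have hB := Ann_mul_Big ht0 ht hz k h1 h2 hw
  have h := th_diff ht0 ht hB
  exact DifferentiableAt.comp z (f := fun z => z * w) h (by fun_prop)

lemma Ann_Big (ht0 : 0 < t) (ht : t ≤ 1/100) {z : ℂ} (hz : z ∈ Ann t) : z ∈ Big t := by
  have := Ann_mul_Big ht0 ht hz (w := 1) 0 (by norm_num) (by norm_num) (by simp)
  simpa using this

lemma ph_div (ht0 : 0 < t) (ht : t ≤ 1/100) {z : ℂ} (hz : z ∈ Ann t) (N : ℂ) :
    N / ph ((t:ℂ)^25) z / (1 - z) = N / th ((t:ℂ)^25) z := by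
  rw [th_ph _ _ (s_ne ht0) (s_lt ht0 ht) (Ann_ne ht0 hz), div_div, mul_comm (1 - z)]

/-- logarithmic derivative at one of the theta function twisted by minus Q -/
noncomputable def alp (t : ℝ) : ℂ :=
  deriv (fun z : ℂ => th ((t:ℂ)^25) (z * (-(t:ℂ)^10))) 1 / th ((t:ℂ)^25) (-(t:ℂ)^10)

lemma ph_deriv (ht0 : 0 < t) (ht : t ≤ 1/100) :
    HasDerivAt (ph ((t:ℂ)^25)) 0 1 := by
  have hd := ph_diff ht0 ht (Ann_Big ht0 ht (one_Ann ht0 ht))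
  have := deriv_sym (ph ((t:ℂ)^25)) 0 hd (by intro z hz; rw [pow_zero, mul_one, ph_inv ht0 ht z hz])
  have h0 : deriv (ph ((t:ℂ)^25)) 1 = 0 := by simpa using this
  rw [← h0]; exact hd.hasDerivAt

lemma SA1_main (ht0 : 0 < t) (ht : t ≤ 1/100) {Q s A B A' B' E Λ : ℂ}
    (hQ : Q = (t:ℂ)^10) (hs : s = (t:ℂ)^25)
    (hA : A = th s Q) (hB : B = th s (Q^2)) (hA' : A' = th s (-Q)) (hB' : B' = th s (-Q^2))
    (hE : E = th s (-1)) (hΛ : Λ = ph s 1) (hA0 : A ≠ 0) (hB0 : B ≠ 0) (hA'0 : A' ≠ 0) :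
    ∃ C : ℂ, ∀ x : ℂ, x ≠ 0 → ‖x‖ ≤ 1/10 → Q = x^5 →
      SA 1 x = - alp t - x^2*(Λ*B'/(B*A')) + Q*Λ*E/(B*A') + C * (x^9)⁻¹ * J x (-1) := by
  have hT0 := Tc_ne ht0
  have hQ0 : Q ≠ 0 := by rw [hQ]; exact pow_ne_zero _ hT0
  have hs0 : s ≠ 0 := by rw [hs]; exact s_ne ht0
  have hps : (t:ℂ)^50 = s^2 := by rw [hs]; ring
  have hpQ : (t:ℂ)^50 = Q^5 := by rw [hQ]; ring
  have nQ : ‖Q‖ = t^(10:ℤ) := by rw [hQ]; exact Q_norm ht0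
  have nQ' : ‖-Q‖ = t^(10:ℤ) := by rw [norm_neg, nQ]
  have nQ2 : ‖Q^2‖ = t^(20:ℤ) := by rw [hQ]; exact Q2_norm ht0
  have nQi : ‖(Q^2)⁻¹‖ = t^(-20:ℤ) := by rw [norm_inv, nQ2, zpow_neg]
  have hΛ0 : Λ ≠ 0 := by rw [hΛ, hs]; exact ph_ne ht0 ht (Ann_Big ht0 ht (one_Ann ht0 ht))
  obtain ⟨κ, hκ⟩ : ∃ κ, κ = -Q^2*Λ/(B^2*A') := ⟨_, rfl⟩
  set h : ℂ → ℂ := fun z => th s (z * Q^2) * th s (z * (Q^2)⁻¹) with hh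
  set l : ℂ → ℂ := fun z => th s (z * (-Q)) with hl
  set f : ℂ → ℂ := fun z => κ * z⁻¹ * h z * l z / ph s z with hf
  have hhd : ∀ z ∈ Ann t, DifferentiableAt ℂ h z := by
    intro z hz
    have a1 := th_mul_diff ht0 ht hz 20 (by norm_num) (by norm_num) nQ2
    have a2 := th_mul_diff ht0 ht hz (-20) (by norm_num) (by norm_num) nQi
    rw [← hs] at a1 a2
    exact a1.mul a2
  have hld : ∀ z ∈ Ann t, DifferentiableAt ℂ l z := by
    intro z hz
    have a1 := th_mul_diff ht0 ht hz 10 (by norm_num) (by norm_num) nQ'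
    rw [← hs] at a1
    exact a1
  have h1A := one_Ann ht0 ht
  have hphd : ∀ z ∈ Ann t, DifferentiableAt ℂ (ph s) z := by
    intro z hz; rw [hs]; exact ph_diff ht0 ht (Ann_Big ht0 ht hz)
  have hphn : ∀ z ∈ Ann t, ph s z ≠ 0 := by
    intro z hz; rw [hs]; exact ph_ne ht0 ht (Ann_Big ht0 ht hz)
  have hfd : ∀ z ∈ Ann t, DifferentiableAt ℂ f z := by
    intro z hz
    have := hhd z hz
    have := hld z hz
    have := hphd z hz
    have := hphn z hz
    have := Ann_ne ht0 hz
    rw [hf]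
    have i1 : DifferentiableAt ℂ (fun z : ℂ => z⁻¹) z := differentiableAt_inv this
    fun_prop (disch := assumption)
  have hti : ∀ z, z ≠ 0 → th s z⁻¹ = -z⁻¹ * th s z := fun z hz => th_inv s z hs0 hz
  have hh1 : h 1 = -(Q^2)⁻¹ * B^2 := by
    rw [hh]; simp only [one_mul]; rw [hti _ (pow_ne_zero _ hQ0), ← hB]; ring
  have hl1 : l 1 = A' := by rw [hl]; simp only [one_mul]; rw [hA']
  have hf1 : f 1 = 1 := by
    simp only [hf]
    rw [hh1, hl1, hκ, ← hΛ]; field_simp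
  have hsym : 2 * deriv h 1 = 2 * h 1 := by
    have := deriv_sym h 2 (hhd 1 h1A) (by
      intro z hz
      simp only [hh]
      have hz2 : z * (Q^2) ≠ 0 := mul_ne_zero hz (pow_ne_zero _ hQ0)
      have hz3 : z * (Q^2)⁻¹ ≠ 0 := mul_ne_zero hz (inv_ne_zero (pow_ne_zero _ hQ0))
      rw [show z⁻¹ * Q^2 = (z * (Q^2)⁻¹)⁻¹ by field_simp, show z⁻¹ * (Q^2)⁻¹ = (z * Q^2)⁻¹ by field_simp,
        hti _ hz2, hti _ hz3]
      field_simp)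
    exact_mod_cast this
  have hh' : HasDerivAt h (h 1) 1 := by
    have : deriv h 1 = h 1 := by linear_combination (1/2) * hsym
    rw [← this]; exact (hhd 1 h1A).hasDerivAt
  obtain ⟨ld, hldd⟩ : ∃ ld, ld = deriv l 1 := ⟨_, rfl⟩
  have hl' : HasDerivAt l ld 1 := by rw [hldd]; exact (hld 1 h1A).hasDerivAt
  have hph' : HasDerivAt (ph s) 0 1 := by rw [hs]; exact ph_deriv ht0 ht
  have halp : alp t = ld / A' := by
    rw [hldd, hA', hl, alp, hs, hQ]
  have hinv : HasDerivAt (fun z : ℂ => κ * z⁻¹) (κ * (-1)) 1 := by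
    have := (hasDerivAt_inv (x := (1:ℂ)) one_ne_zero).const_mul κ
    simpa using this
  have hfder : deriv f 1 = alp t := by
    have := ((hinv.fun_mul hh').fun_mul hl').fun_div hph' (hphn 1 h1A)
    rw [hf, this.deriv, halp, hh1, hl1, ← hΛ, hκ]
    field_simp; ring
  have hfe : ∀ z ∈ Ann t, (t:ℂ)^50 * z ∈ Ann t → z ≠ 1 → (t:ℂ)^50 * z ≠ 1 →
      f ((t:ℂ)^50 * z) / (1 - (t:ℂ)^50 * z) = - (f z / (1 - z)) / ((t:ℂ)^50 * Q^1 * z^2) := by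
    intro z hz hpz h1 h2
    have hz0 := Ann_ne ht0 hz
    simp only [hf, hh, hl]
    have k1 := ph_div ht0 ht hz (κ * z⁻¹ * (th s (z * Q^2) * th s (z * (Q^2)⁻¹)) * th s (z * (-Q)))
    have k2 := ph_div ht0 ht hpz (κ * ((t:ℂ)^50*z)⁻¹ * (th s ((t:ℂ)^50*z * Q^2) * th s ((t:ℂ)^50*z * (Q^2)⁻¹)) * th s ((t:ℂ)^50*z * (-Q)))
    rw [← hs] at k1 k2
    rw [k1, k2, hps, mul_assoc (s^2) z (Q^2), mul_assoc (s^2) z (Q^2)⁻¹, mul_assoc (s^2) z (-Q),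
      th_shift s _ hs0 hz0, th_shift s (z * Q^2) hs0 (by simp [hz0, hQ0]),
      th_shift s (z * (Q^2)⁻¹) hs0 (by simp [hz0, hQ0]), th_shift s (z * (-Q)) hs0 (by simp [hz0, hQ0])]
    have hthn : th s z ≠ 0 := by rw [hs]; exact th_ne ht0 ht (Ann_Big ht0 ht hz) h1
    field_simp
  obtain ⟨c0, c1, hc⟩ := appell ht0 ht (y := Q^1)
    (by rw [pow_one, nQ]; exact_mod_cast pow_le_pow_of_le_one ht0.le (by linarith : t ≤ 1) (by norm_num : 10 ≤ 20))
    (by rw [pow_one, nQ]; exact_mod_cast pow_le_one₀ ht0.le (by linarith : t ≤ 1))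
    f hfd hf1 hfe
  refine ⟨-c1, ?_⟩
  intro x hx0 hx hxQ
  have hfin := SA_comb ht0 ht 1 Q _ hQ rfl _ c0 c1 hc x hx0 hx hxQ
  have m1 : Q⁻¹ ∈ Ann t := by
    have hlt : t^26 < t^10 := pow_lt_pow_right_of_lt_one₀ ht0 (by linarith) (by norm_num)
    have hlt1 : t^10 ≤ 1 := pow_le_one₀ ht0.le (by linarith)
    have nn : ‖Q⁻¹‖ = (t^10)⁻¹ := by rw [norm_inv, nQ]; norm_cast
    refine ⟨?_, ?_⟩
    · rw [nn]; exact lt_of_lt_of_le (lt_of_lt_of_le hlt hlt1) ((one_le_inv₀ (by positivity)).2 hlt1)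
    · rw [nn]; exact inv_strictAnti₀ (by positivity) hlt
  have m2 : Q ∈ Ann t := by
    have hlt : t^26 < t^10 := pow_lt_pow_right_of_lt_one₀ ht0 (by linarith) (by norm_num)
    have hlt1 : t^26 < 1 := pow_lt_one₀ ht0.le (by linarith) (by norm_num)
    have hlt2 : t^10 ≤ 1 := pow_le_one₀ ht0.le (by linarith)
    have nn : ‖Q‖ = (t^10) := by rw [nQ]; norm_cast
    refine ⟨by rw [nn]; exact hlt, ?_⟩
    rw [nn]; exact lt_of_le_of_lt hlt2 ((one_lt_inv₀ (by positivity)).2 hlt1)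
  have sh : ∀ z, z ≠ 0 → th s (Q^5 * z) = th s z⁻¹ := by
    intro z hz; rw [hs, hQ]; exact th_T ht0 z hz
  have t3 : th s (Q^3) = B := by
    have := sh (Q^2)⁻¹ (by simp [hQ0]); rw [inv_inv, ← hB] at this; rw [← this]; congr 1; field_simp
  have v1 : f Q / (1 - Q) = Λ*B'/(B*A') := by
    have k1 := ph_div ht0 ht m2 (κ * Q⁻¹ * (th s (Q * Q^2) * th s (Q * (Q^2)⁻¹)) * th s (Q * (-Q)))
    simp only [hf, hh, hl]
    rw [← hs] at k1
    rw [k1, show Q * Q^2 = Q^3 by ring, show Q * (Q^2)⁻¹ = Q⁻¹ by field_simp, show Q * (-Q) = -Q^2 by ring,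
      t3, hti _ hQ0, ← hA, ← hB', hκ]
    field_simp
  have v2 : f Q⁻¹ / (1 - Q⁻¹) = -(Q*Λ*E/(B*A')) := by
    have k1 := ph_div ht0 ht m1 (κ * Q⁻¹⁻¹ * (th s (Q⁻¹ * Q^2) * th s (Q⁻¹ * (Q^2)⁻¹)) * th s (Q⁻¹ * (-Q)))
    simp only [hf, hh, hl]
    rw [← hs] at k1
    rw [k1, show Q⁻¹ * Q^2 = Q by field_simp, show Q⁻¹ * (Q^2)⁻¹ = (Q^3)⁻¹ by field_simp, show Q⁻¹ * (-Q) = -1 by field_simp,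
      hti _ hQ0, hti _ (pow_ne_zero _ hQ0), t3, ← hA, ← hE, hκ]
    field_simp
  have v3 : f (Q^2) = 0 := by
    simp only [hf, hh]
    rw [show Q^2 * (Q^2)⁻¹ = 1 by field_simp, th_one s hs0]; simp
  have v4 : f (Q^2)⁻¹ = 0 := by
    simp only [hf, hh]
    rw [show (Q^2)⁻¹ * Q^2 = 1 by field_simp, th_one s hs0]; simp
  have o1 : Q ≠ 1 := ne_one_of_norm ht0 ht 10 (by norm_num) nQ
  have o2 : Q^2 ≠ 1 := ne_one_of_norm ht0 ht 20 (by norm_num) nQ2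
  rw [if_neg (inv_ne_one.2 o2), if_neg (inv_ne_one.2 o1), if_pos rfl, if_neg o1, if_neg o2, v1, v2, v3, v4,
    J_x1 x hx0, J_x6 x hx0, hfder] at hfin
  push_cast at hfin
  rw [hfin]
  norm_num
  ring

lemma SA2_main (ht0 : 0 < t) (ht : t ≤ 1/100) {Q s A B A' B' E Λ : ℂ}
    (hQ : Q = (t:ℂ)^10) (hs : s = (t:ℂ)^25)
    (hA : A = th s Q) (hB : B = th s (Q^2)) (hA' : A' = th s (-Q)) (hB' : B' = th s (-Q^2))
    (hE : E = th s (-1)) (hΛ : Λ = ph s 1) (hA0 : A ≠ 0) (hB0 : B ≠ 0) (hA'0 : A' ≠ 0) (hE0 : E ≠ 0) :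
    ∃ C : ℂ, ∀ x : ℂ, x ≠ 0 → ‖x‖ ≤ 1/10 → Q = x^5 →
      SA 2 x = - (2 * alp t - 1/2) - x^3*(Λ*B'^2/(Q*A*A'*E)) + x⁻¹*(Λ*Q*E/(A*A'))
        + x^8*(Λ*B'^3/(Q^2*A'^2*E*B)) - Λ*B'/(E*B) + C * x⁻¹ * J x (-1) := by
  have hT0 := Tc_ne ht0
  have hQ0 : Q ≠ 0 := by rw [hQ]; exact pow_ne_zero _ hT0
  have hs0 : s ≠ 0 := by rw [hs]; exact s_ne ht0
  have hps : (t:ℂ)^50 = s^2 := by rw [hs]; ring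
  have hpQ : (t:ℂ)^50 = Q^5 := by rw [hQ]; ring
  have nQ : ‖Q‖ = t^(10:ℤ) := by rw [hQ]; exact Q_norm ht0
  have nQ' : ‖-Q‖ = t^(10:ℤ) := by rw [norm_neg, nQ]
  have nQ2 : ‖Q^2‖ = t^(20:ℤ) := by rw [hQ]; exact Q2_norm ht0
  have hΛ0 : Λ ≠ 0 := by rw [hΛ, hs]; exact ph_ne ht0 ht (Ann_Big ht0 ht (one_Ann ht0 ht))
  obtain ⟨κ, hκ⟩ : ∃ κ, κ = Λ/(A'^2*E) := ⟨_, rfl⟩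
  set h : ℂ → ℂ := fun z => th s (z * (-1)) with hh
  set l : ℂ → ℂ := fun z => th s (z * (-Q)) with hl
  set f : ℂ → ℂ := fun z => κ * z⁻¹ * h z * (l z * l z) / ph s z with hf
  have hhd : ∀ z ∈ Ann t, DifferentiableAt ℂ h z := by
    intro z hz
    have a1 := th_mul_diff ht0 ht hz (w := -1) 0 (by norm_num) (by norm_num) (by simp)
    rw [← hs] at a1
    exact a1
  have hld : ∀ z ∈ Ann t, DifferentiableAt ℂ l z := by
    intro z hz
    have a1 := th_mul_diff ht0 ht hz 10 (by norm_num) (by norm_num) nQ'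
    rw [← hs] at a1
    exact a1
  have h1A := one_Ann ht0 ht
  have hphd : ∀ z ∈ Ann t, DifferentiableAt ℂ (ph s) z := by
    intro z hz; rw [hs]; exact ph_diff ht0 ht (Ann_Big ht0 ht hz)
  have hphn : ∀ z ∈ Ann t, ph s z ≠ 0 := by
    intro z hz; rw [hs]; exact ph_ne ht0 ht (Ann_Big ht0 ht hz)
  have hfd : ∀ z ∈ Ann t, DifferentiableAt ℂ f z := by
    intro z hz
    have := hhd z hz
    have := hld z hz
    have := hphd z hz
    have := hphn z hz
    have := Ann_ne ht0 hz
    rw [hf]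
    have i1 : DifferentiableAt ℂ (fun z : ℂ => z⁻¹) z := differentiableAt_inv this
    fun_prop (disch := assumption)
  have hti : ∀ z, z ≠ 0 → th s z⁻¹ = -z⁻¹ * th s z := fun z hz => th_inv s z hs0 hz
  have hh1 : h 1 = E := by
    rw [hh]; simp only [one_mul]; rw [hE]
  have hl1 : l 1 = A' := by rw [hl]; simp only [one_mul]; rw [hA']
  have hf1 : f 1 = 1 := by
    simp only [hf]
    rw [hh1, hl1, hκ, ← hΛ]; field_simp
  have hsym : 2 * deriv h 1 = 1 * h 1 := by
    have := deriv_sym h 1 (hhd 1 h1A) (by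
      intro z hz
      simp only [hh]
      rw [show z⁻¹ * (-1) = (z * (-1))⁻¹ by field_simp, hti _ (by simp [hz])]
      field_simp)
    exact_mod_cast this
  have hh' : HasDerivAt h (h 1 / 2) 1 := by
    have : deriv h 1 = h 1 / 2 := by linear_combination (1/2) * hsym
    rw [← this]; exact (hhd 1 h1A).hasDerivAt
  obtain ⟨ld, hldd⟩ : ∃ ld, ld = deriv l 1 := ⟨_, rfl⟩
  have hl' : HasDerivAt l ld 1 := by rw [hldd]; exact (hld 1 h1A).hasDerivAt
  have hph' : HasDerivAt (ph s) 0 1 := by rw [hs]; exact ph_deriv ht0 ht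
  have halp : alp t = ld / A' := by
    rw [hldd, hA', hl, alp, hs, hQ]
  have hinv : HasDerivAt (fun z : ℂ => κ * z⁻¹) (κ * (-1)) 1 := by
    have := (hasDerivAt_inv (x := (1:ℂ)) one_ne_zero).const_mul κ
    simpa using this
  have hfder : deriv f 1 = 2 * alp t - 1/2 := by
    have := ((hinv.fun_mul hh').fun_mul (hl'.fun_mul hl')).fun_div hph' (hphn 1 h1A)
    rw [hf, this.deriv, halp, hh1, hl1, ← hΛ, hκ]
    field_simp; ring
  have hfe : ∀ z ∈ Ann t, (t:ℂ)^50 * z ∈ Ann t → z ≠ 1 → (t:ℂ)^50 * z ≠ 1 →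
      f ((t:ℂ)^50 * z) / (1 - (t:ℂ)^50 * z) = - (f z / (1 - z)) / ((t:ℂ)^50 * Q^2 * z^2) := by
    intro z hz hpz h1 h2
    have hz0 := Ann_ne ht0 hz
    simp only [hf, hh, hl]
    have k1 := ph_div ht0 ht hz (κ * z⁻¹ * (th s (z * (-1))) * (th s (z * (-Q)) * th s (z * (-Q))))
    have k2 := ph_div ht0 ht hpz (κ * ((t:ℂ)^50*z)⁻¹ * (th s ((t:ℂ)^50*z * (-1))) * (th s ((t:ℂ)^50*z * (-Q)) * th s ((t:ℂ)^50*z * (-Q))))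
    rw [← hs] at k1 k2
    rw [k1, k2, hps, mul_assoc (s^2) z (-1), mul_assoc (s^2) z (-Q),
      th_shift s _ hs0 hz0, th_shift s (z * (-1)) hs0 (by simp [hz0]),
      th_shift s (z * (-Q)) hs0 (by simp [hz0, hQ0])]
    have hthn : th s z ≠ 0 := by rw [hs]; exact th_ne ht0 ht (Ann_Big ht0 ht hz) h1
    field_simp
  obtain ⟨c0, c1, hc⟩ := appell ht0 ht (y := Q^2)
    (by rw [nQ2]; exact_mod_cast le_refl _)
    (by rw [nQ2]; exact_mod_cast pow_le_one₀ ht0.le (by linarith : t ≤ 1))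
    f hfd hf1 hfe
  refine ⟨-c0, ?_⟩
  intro x hx0 hx hxQ
  have hfin := SA_comb ht0 ht 2 Q _ hQ rfl _ c0 c1 hc x hx0 hx hxQ
  have mA : ∀ k : ℕ, k ≤ 20 → 0 < k → ∀ z : ℂ, ‖z‖ = t^k → z ∈ Ann t ∧ z⁻¹ ∈ Ann t := by
    intro k hk hk0 z hz
    have hlt : t^26 < t^k := pow_lt_pow_right_of_lt_one₀ ht0 (by linarith) (by omega)
    have hlt1 : t^k ≤ 1 := pow_le_one₀ ht0.le (by linarith)
    have hlt2 : t^26 < 1 := pow_lt_one₀ ht0.le (by linarith) (by norm_num)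
    refine ⟨⟨by rw [hz]; exact hlt, ?_⟩, ⟨?_, ?_⟩⟩
    · rw [hz]; exact lt_of_le_of_lt hlt1 ((one_lt_inv₀ (by positivity)).2 hlt2)
    · rw [norm_inv, hz]; exact lt_of_lt_of_le hlt2 ((one_le_inv₀ (by positivity)).2 hlt1)
    · rw [norm_inv, hz]; exact inv_strictAnti₀ (by positivity) hlt
  obtain ⟨m2, m1⟩ := mA 10 (by norm_num) (by norm_num) Q (by rw [nQ]; norm_cast)
  obtain ⟨m4, m3⟩ := mA 20 (by norm_num) (by norm_num) (Q^2) (by rw [nQ2]; norm_cast)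
  have sh : ∀ z, z ≠ 0 → th s (Q^5 * z) = th s z⁻¹ := by
    intro z hz; rw [hs, hQ]; exact th_T ht0 z hz
  have t3' : th s (-Q^3) = B' := by
    have := sh (-Q^2)⁻¹ (by simp [hQ0]); rw [inv_inv, ← hB'] at this; rw [← this]; congr 1; field_simp
  have vv : ∀ z ∈ Ann t, f z / (1 - z) = κ * z⁻¹ * (th s (z * (-1))) * (th s (z * (-Q)) * th s (z * (-Q))) / th s z := by
    intro z hz
    have k1 := ph_div ht0 ht hz (κ * z⁻¹ * (th s (z * (-1))) * (th s (z * (-Q)) * th s (z * (-Q))))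
    rw [← hs] at k1
    exact k1
  have v1 : f Q / (1 - Q) = Λ*B'^2/(Q*A*A'*E) := by
    rw [vv _ m2, show Q * (-1) = -Q by ring, show Q * (-Q) = -Q^2 by ring, ← hA, ← hA', ← hB', hκ]
    field_simp
  have v2 : f Q⁻¹ / (1 - Q⁻¹) = -(Λ*Q*E/(A*A')) := by
    rw [vv _ m1, show Q⁻¹ * (-1) = (-Q)⁻¹ by field_simp, show Q⁻¹ * (-Q) = -1 by field_simp,
      hti _ hQ0, hti _ (neg_ne_zero.2 hQ0), ← hA, ← hA', ← hE, hκ]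
    field_simp
  have v3 : f (Q^2) / (1 - Q^2) = Λ*B'^3/(Q^2*A'^2*E*B) := by
    rw [vv _ m4, show Q^2 * (-1) = -Q^2 by ring, show Q^2 * (-Q) = -Q^3 by ring, t3', ← hB, ← hB', hκ]
    field_simp
  have v4 : f (Q^2)⁻¹ / (1 - (Q^2)⁻¹) = -(Λ*B'/(E*B)) := by
    rw [vv _ m3, show (Q^2)⁻¹ * (-1) = (-Q^2)⁻¹ by field_simp, show (Q^2)⁻¹ * (-Q) = (-Q)⁻¹ by field_simp,
      hti _ (pow_ne_zero _ hQ0), hti _ (neg_ne_zero.2 hQ0), hti _ (neg_ne_zero.2 (pow_ne_zero _ hQ0)), ← hB, ← hA', ← hB', hκ]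
    field_simp
  have o1 : Q ≠ 1 := ne_one_of_norm ht0 ht 10 (by norm_num) nQ
  have o2 : Q^2 ≠ 1 := ne_one_of_norm ht0 ht 20 (by norm_num) nQ2
  rw [if_neg (inv_ne_one.2 o2), if_neg (inv_ne_one.2 o1), if_pos rfl, if_neg o1, if_neg o2, v1, v2, v3, v4,
    J_x2 x hx0, J_x7 x hx0, hfder] at hfin
  push_cast at hfin
  rw [hfin]
  norm_num
  ring

end
end OP

namespace OP
open Filter Topology MeasureTheory

lemma key_id (u v x Q : ℂ) (hu : u ≠ 0) (hv : v ≠ 0) (hs : u + v ≠ 0) (hQ0 : Q ≠ 0) (hQ : x^5 = Q)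
    (hR : v - u = Q*u^3*v^2*(u+v)) :
    2*Q*u*(u+v) + 1/(u*v*(u+v)) - 2*x^2/v + (x^3/(Q*u^2*v^2*(u+v)) - x^3/(Q*u*v^3*(u+v))) - x^4*(u+v)
     = (1 - x*(u+v) + x^4*u^2*v*(u+v)) * (1/(u*v*(u+v)) + x/(u*v) + x^3 - x^4*u) := by
  have e1 : x^3/(Q*u^2*v^2*(u+v)) - x^3/(Q*u*v^3*(u+v)) = x^3 - x^3*Q*u^3*v*(u+v) := by
    have : x^3/(Q*u^2*v^2*(u+v)) - x^3/(Q*u*v^3*(u+v)) = x^3*(v-u)/(Q*u^2*v^3*(u+v)) := by field_simp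
    rw [this, hR]
    have h2 : x^3 * (Q*u^3*v^2*(u+v))/(Q*u^2*v^3*(u+v)) = x^3*(u/v) := by field_simp
    have h3 : u/v = 1 - Q*u^3*v*(u+v) := by
      field_simp; linear_combination (-1)*hR
    rw [h2, h3]; ring
  have e2 : -2*x^2/v = -x^2*(u+v)/(u*v) + x^2*Q*u^2*v*(u+v) := by
    field_simp; linear_combination x^2 * hR
  have e3 : (1 - x*(u+v) + x^4*u^2*v*(u+v)) * (1/(u*v*(u+v)) + x/(u*v) + x^3 - x^4*u)
     = 1/(u*v*(u+v)) - x^2*(u+v)/(u*v) + x^3 - x^4*(u+v) + 2*x^5*u*(u+v) + x^2*x^5*u^2*v*(u+v) - x^3*x^5*u^3*v*(u+v) := by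
    field_simp; ring
  rw [e3, e1, hQ]
  linear_combination e2

theorem Fg_class {t : ℝ} (ht0 : 0 < t) (ht : t ≤ 1/100) : ∃ c0 c1 c3 c4 : ℂ, ∀ x : ℂ, x ≠ 0 → ‖x‖ ≤ 1/10 →
    (t:ℂ)^10 = x^5 → Fg x = c0 + c1*x + c3*x^3 + c4*x^4 := by
  obtain ⟨Q, hQ⟩ : ∃ Q, Q = (t:ℂ)^10 := ⟨_, rfl⟩
  obtain ⟨s, hs⟩ : ∃ s, s = (t:ℂ)^25 := ⟨_, rfl⟩
  obtain ⟨p, hp⟩ : ∃ p, p = (t:ℂ)^50 := ⟨_, rfl⟩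
  obtain ⟨A, hA⟩ : ∃ A, A = th s Q := ⟨_, rfl⟩
  obtain ⟨B, hB⟩ : ∃ B, B = th s (Q^2) := ⟨_, rfl⟩
  obtain ⟨A', hA'⟩ : ∃ A', A' = th s (-Q) := ⟨_, rfl⟩
  obtain ⟨B', hB'⟩ : ∃ B', B' = th s (-Q^2) := ⟨_, rfl⟩
  obtain ⟨E, hE⟩ : ∃ E, E = th s (-1) := ⟨_, rfl⟩
  obtain ⟨Λ, hΛ⟩ : ∃ Λ, Λ = ph s 1 := ⟨_, rfl⟩
  obtain ⟨a, ha⟩ : ∃ a, a = J p (-1) := ⟨_, rfl⟩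
  obtain ⟨b, hb⟩ : ∃ b, b = J p (-Q^2) := ⟨_, rfl⟩
  obtain ⟨c, hc⟩ : ∃ c, c = J p (-Q^4) := ⟨_, rfl⟩
  obtain ⟨⟨hA0, hB0, hA'0, hB'0, hE0, ha0⟩, r1, r2, r3, r4⟩ :=
    theta_rel ht0 ht rfl hQ hs hp hA hB hA' hB' hE ha hb hc
  obtain ⟨C1, h1⟩ := SA1_main ht0 ht hQ hs hA hB hA' hB' hE hΛ hA0 hB0 hA'0
  obtain ⟨C2, h2⟩ := SA2_main ht0 ht hQ hs hA hB hA' hB' hE hΛ hA0 hB0 hA'0 hE0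
  have hQ0 : Q ≠ 0 := by rw [hQ]; exact pow_ne_zero _ (Tc_ne ht0)
  obtain ⟨u, hu⟩ : ∃ u, u = A/B := ⟨_, rfl⟩
  obtain ⟨v, hv⟩ : ∃ v, v = A'/B' := ⟨_, rfl⟩
  have hu0 : u ≠ 0 := by rw [hu]; exact div_ne_zero hA0 hB0
  have hv0 : v ≠ 0 := by rw [hv]; exact div_ne_zero hA'0 hB'0
  have eA : A = u*B := by rw [hu]; field_simp
  have eA' : A' = v*B' := by rw [hv]; field_simp
  have eE : E = B'*(u*v*(u+v)) := by
    rw [eA, eA'] at r1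
    have : B^2*B' ≠ 0 := by simp [hB0, hB'0]
    apply mul_left_cancel₀ this
    linear_combination r1
  have hs0 : u + v ≠ 0 := by
    intro h; apply hE0; rw [eE, h]; ring
  have eR : v - u = Q*u^3*v^2*(u+v) := by
    rw [eA, eA'] at r2
    have : B^4*B'^3 ≠ 0 := by simp [hB0, hB'0]
    apply mul_left_cancel₀ this
    linear_combination r2
  have eb : 2*b = a*(u+v) := by
    rw [eA, eA'] at r3
    have : B*B' ≠ 0 := by simp [hB0, hB'0]
    apply mul_left_cancel₀ this
    linear_combination r3
  have ec : 2*c = a*u^2*v*(u+v) := by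
    rw [eA, eA'] at r4
    have : B^3*B'^2 ≠ 0 := by simp [hB0, hB'0]
    apply mul_left_cancel₀ this
    linear_combination r4
  refine ⟨2*Λ/(a*B)*(1/(u*v*(u+v))), 2*Λ/(a*B)/(u*v) + 4*C1/Q^2, 2*Λ/(a*B), -(2*Λ/(a*B)*u) - 2*C2/Q, ?_⟩
  intro x hx0 hx hxQ
  rw [← hQ] at hxQ
  obtain ⟨hJ0, hF⟩ := Fg_main hx0 hx
  have hJ := J_neg_one x Q p hx0 (by linarith) hxQ.symm (by rw [hp, hQ]; ring)
  rw [← ha, ← hb, ← hc] at hJ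
  have hJ' : J x (-1) = a * (1 - x*(u+v) + x^4*u^2*v*(u+v)) := by
    rw [hJ]; linear_combination -x*eb + x^4*ec
  have hk := key_id u v x Q hu0 hv0 hs0 hQ0 hxQ.symm eR
  apply mul_right_cancel₀ hJ0
  rw [hF, h1 x hx0 hx hxQ, h2 x hx0 hx hxQ]
  have x9 : (x^9)⁻¹ = x/Q^2 := by rw [hxQ]; field_simp
  have x1 : x⁻¹ = x^4/Q := by rw [hxQ]; field_simp
  have x8 : x^8 = x^3*Q := by rw [hxQ]; ring
  rw [x9, x1, x8]
  have w1 : Λ*B'/(B*A') = Λ/B*(1/v) := by rw [eA']; field_simp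
  have w2 : Q*Λ*E/(B*A') = Λ/B*(Q*u*(u+v)) := by rw [eA', eE]; field_simp
  have w3 : Λ*B'^2/(Q*A*A'*E) = Λ/B*(1/(Q*u^2*v^2*(u+v))) := by rw [eA', eA, eE]; field_simp
  have w4 : x^4/Q*(Λ*Q*E/(A*A')) = Λ/B*(x^4*(u+v)) := by rw [eA', eA, eE]; field_simp
  have w5 : x^3*Q*(Λ*B'^3/(Q^2*A'^2*E*B)) = Λ/B*(x^3/(Q*u*v^3*(u+v))) := by rw [eA', eE]; field_simp
  have w6 : Λ*B'/(E*B) = Λ/B*(1/(u*v*(u+v))) := by rw [eE]; field_simp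
  rw [w1, w2, w3, w4, w5, w6]
  have hfin : (2*Λ/(a*B)*(1/(u*v*(u+v)) + x/(u*v) + x^3 - x^4*u)) * J x (-1) =
      2*(Λ/B)*(2*Q*u*(u+v) + 1/(u*v*(u+v)) - 2*x^2/v + (x^3/(Q*u^2*v^2*(u+v)) - x^3/(Q*u*v^3*(u+v))) - x^4*(u+v)) := by
    rw [hk, hJ']
    generalize (1 - x*(u+v) + x^4*u^2*v*(u+v)) = X
    generalize (1/(u*v*(u+v)) + x/(u*v) + x^3 - x^4*u) = Y
    field_simp
  linear_combination (-1)*hfin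

open Complex in
/-- The fifth-root-of-unity filter kills the class of two. -/
lemma Fn_class_sum {t : ℝ} (ht0 : 0 < t) (ht : t ≤ 1/100) :
    HasSum (fun m : ℕ => (Fn (5*m+2) : ℂ) * ((t:ℂ)^10)^m) 0 := by
  obtain ⟨c0, c1, c3, c4, hc⟩ := Fg_class ht0 ht
  obtain ⟨ω, hω⟩ : ∃ ω : ℂ, IsPrimitiveRoot ω 5 := ⟨_, Complex.isPrimitiveRoot_exp 5 (by norm_num)⟩
  have hω5 : ω^5 = 1 := hω.pow_eq_one
  have hω0 : ω ≠ 0 := hω.ne_zero (by norm_num)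
  have hgeo : 1 + ω + ω^2 + ω^3 + ω^4 = 0 := by
    have := hω.geom_sum_eq_zero (by norm_num)
    simp [Finset.sum_range_succ] at this
    exact this
  have hnorm : ‖ω‖ = 1 := Complex.norm_eq_one_of_pow_eq_one hω5 (by norm_num)
  obtain ⟨q, hq⟩ : ∃ q, q = (t:ℂ)^2 := ⟨_, rfl⟩
  have hq0 : q ≠ 0 := by rw [hq]; exact pow_ne_zero _ (Tc_ne ht0)
  have hqn : ‖q‖ ≤ 1/10 := by
    rw [hq, norm_pow, T_norm ht0]; nlinarith
  have hxn : ∀ k : ℕ, ‖ω^k*q‖ ≤ 1/10 := by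
    intro k; rw [norm_mul, norm_pow, hnorm]; simpa using hqn
  have hval : ∀ k : ℕ, Fg (ω^k*q) = c0 + c1*(ω^k*q) + c3*(ω^k*q)^3 + c4*(ω^k*q)^4 := by
    intro k
    apply hc _ (mul_ne_zero (pow_ne_zero _ hω0) hq0) (hxn k)
    rw [mul_pow, ← pow_mul, mul_comm k 5, pow_mul, hω5, hq]; ring
  have hsum : ∀ k : ℕ, HasSum (fun n => (Fn n : ℂ) * (ω^k*q)^n) (Fg (ω^k*q)) := fun k =>
    (Fg_summ (hxn k)).hasSum
  have H := hasSum_sum (s := Finset.range 5) (fun k _ => (hsum k).mul_left (ω^(3*k)))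
  have hz : ∑ k ∈ Finset.range 5, ω^(3*k) * Fg (ω^k*q) = 0 := by
    simp only [hval, Finset.sum_range_succ, Finset.sum_range_zero]
    have e : ∀ n, ω^(n+5) = ω^n := fun n => by rw [pow_add, hω5, mul_one]
    ring_nf
    have r : ∀ n, ω^(5+n) = ω^n := fun n => by rw [add_comm]; exact e n
    have f5 : ω^5 = 1 := hω5
    have f6 : ω^6 = ω := by rw [show 6 = 1+5 by norm_num, e, pow_one]
    have f7 : ω^7 = ω^2 := e 2
    have f8 : ω^8 = ω^3 := e 3
    have f9 : ω^9 = ω^4 := e 4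
    have f10 : ω^10 = 1 := by rw [show 10 = 5+5 by norm_num, e, f5]
    have f12 : ω^12 = ω^2 := by rw [show 12 = 7+5 by norm_num, e, f7]
    have f13 : ω^13 = ω^3 := by rw [show 13 = 8+5 by norm_num, e, f8]
    have f14 : ω^14 = ω^4 := by rw [show 14 = 9+5 by norm_num, e, f9]
    have f16 : ω^16 = ω := by rw [show 16 = 11+5 by norm_num, e, show 11 = 6+5 by norm_num, e, f6]
    have f18 : ω^18 = ω^3 := by rw [show 18 = 13+5 by norm_num, e, f13]
    have f21 : ω^21 = ω := by rw [show 21 = 16+5 by norm_num, e, f16]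
    have f24 : ω^24 = ω^4 := by rw [show 24 = 19+5 by norm_num, e, show 19 = 14+5 by norm_num, e, f14]
    have f28 : ω^28 = ω^3 := by rw [show 28 = 23+5 by norm_num, e, show 23 = 18+5 by norm_num, e, f18]
    simp only [f5, f6, f7, f8, f9, f10, f12, f13, f14, f16, f18, f21, f24, f28]
    linear_combination (c0 + c1*q + c3*q^3 + c4*q^4) * hgeo
  rw [hz] at H
  have hterm : ∀ n, ∑ k ∈ Finset.range 5, ω^(3*k) * ((Fn n : ℂ) * (ω^k*q)^n) =
      if n % 5 = 2 then 5 * ((Fn n : ℂ) * q^n) else 0 := by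
    intro n
    have h1 : ∀ k ∈ Finset.range 5, ω^(3*k) * ((Fn n : ℂ) * (ω^k*q)^n) = ((Fn n : ℂ) * q^n) * (ω^(n+3))^k := by
      intro k _
      rw [mul_pow, ← pow_mul, ← pow_mul, show (n+3)*k = 3*k + k*n by ring, pow_add]; ring
    rw [Finset.sum_congr rfl h1, ← Finset.mul_sum]
    split_ifs with h
    · have : ω^(n+3) = 1 := by
        rw [hω.pow_eq_one_iff_dvd]; omega
      rw [this]; simp; ring
    · have hne : ω^(n+3) ≠ 1 := by
        rw [Ne, hω.pow_eq_one_iff_dvd]; omega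
      have := mul_neg_geom_sum (ω^(n+3)) 5
      rw [← pow_mul, mul_comm (n+3) 5, pow_mul, hω5, one_pow, sub_self] at this
      rw [(mul_eq_zero.1 this).resolve_left (sub_ne_zero.2 hne.symm), mul_zero]
  simp only [hterm] at H
  have hinj : Function.Injective (fun m : ℕ => 5*m+2) := by intro a b h; simp at h; exact h
  have H2 := (hinj.hasSum_iff (f := fun n => if n % 5 = 2 then 5 * ((Fn n : ℂ) * q^n) else 0) (a := 0) (by
    intro n hn
    rw [if_neg]
    intro h; apply hn
    exact ⟨n/5, by simp; omega⟩)).2 H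
  have H3 := H2.mul_left ((5*q^2)⁻¹)
  rw [mul_zero] at H3
  convert! H3 using 2 with m
  simp only [Function.comp]
  rw [if_pos (by omega), hq]
  have hTT := Tc_ne ht0
  rw [pow_add, pow_mul]
  field_simp

end OP

namespace OP
open Filter Topology

lemma Fn_zero (m : ℕ) : Fn (5*m+2) = 0 := by
  set a : ℕ → ℂ := fun m => (Fn (5*m+2) : ℂ) with ha
  set p : FormalMultilinearSeries ℂ ℂ ℂ := FormalMultilinearSeries.ofScalars ℂ a with hp
  have hco : ∀ n, p.coeff n = a n := fun n => by
    simp [hp, FormalMultilinearSeries.coeff_ofScalars]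
  set f : ℂ → ℂ := fun z => ∑' n, a n * z^n with hf
  have hs : Summable (fun n => ‖a n * (((1/100:ℝ):ℂ)^10)^n‖) :=
    (Fn_class_sum (t := 1/100) (by norm_num) le_rfl).summable.norm
  have hball : ∀ᶠ z : ℂ in 𝓝 0, ‖z‖ < ‖(((1/100:ℝ):ℂ)^10)‖ := by
    have : Metric.ball (0:ℂ) ‖(((1/100:ℝ):ℂ)^10)‖ ∈ 𝓝 (0:ℂ) :=
      Metric.ball_mem_nhds _ (by rw [norm_pos_iff]; norm_num)
    filter_upwards [this] with z hz
    simpa using hz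
  have hfp : HasFPowerSeriesAt f p 0 := by
    rw [hasFPowerSeriesAt_iff]
    filter_upwards [hball] with z hz
    have : Summable (fun n => a n * z^n) := by
      refine Summable.of_norm_bounded hs (fun n => ?_)
      rw [norm_mul, norm_mul, norm_pow, norm_pow (((1/100:ℝ):ℂ)^10)]
      gcongr
    have h2 := this.hasSum
    simp only [hco, smul_eq_mul, zero_add]
    simpa [hf, mul_comm] using h2
  have htend : Tendsto (fun k : ℕ => (((1/((k:ℝ)+1+99) : ℝ):ℂ))^10) atTop (𝓝[≠] 0) := by
    rw [tendsto_nhdsWithin_iff]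
    constructor
    · have h0 : Tendsto (fun k : ℕ => (1/((k:ℝ)+1+99) : ℝ)) atTop (𝓝 0) := by
        have := (tendsto_one_div_add_atTop_nhds_zero_nat (𝕜 := ℝ)).comp (tendsto_add_atTop_nat 99)
        refine this.congr (fun k => ?_)
        simp only [Function.comp]; push_cast; ring
      have h1 := ((Complex.continuous_ofReal.tendsto 0).comp h0).pow 10
      simpa using h1
    · filter_upwards with k
      have : ((1/((k:ℝ)+1+99) : ℝ)) ≠ 0 := by positivity
      simp only [Set.mem_compl_iff, Set.mem_singleton_iff]
      exact pow_ne_zero _ (Complex.ofReal_ne_zero.2 this)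
  have hfreq : ∃ᶠ z in 𝓝[≠] (0:ℂ), f z = 0 := by
    refine htend.frequently (Eventually.frequently (Eventually.of_forall (fun k => ?_)))
    have hk : (1/((k:ℝ)+1+99) : ℝ) ≤ 1/100 := by
      apply one_div_le_one_div_of_le (by norm_num)
      have : (0:ℝ) ≤ k := by positivity
      linarith
    exact (Fn_class_sum (by positivity) hk).tsum_eq
  have hp0 : p = 0 :=
    hfp.locally_zero_iff.1 (hfp.analyticAt.frequently_zero_iff_eventually_zero.1 hfreq)
  have := hco m
  rw [hp0] at this
  simp only [ha] at this
  have h3 : (Fn (5*m+2) : ℂ) = 0 := by rw [← this]; simp [FormalMultilinearSeries.coeff]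
  exact_mod_cast h3
end OP

theorem stmt7 (n : ℕ) (hn : 0 < n) (h5 : n % 5 = 2) :
    nbar 0 5 n = nbar 2 5 n := by
  have h := OP.nbar_diff n
  have h2 : n = 5 * (n / 5) + 2 := by omega
  have h3 : OP.Fn n = 0 := by
    rw [h2]; exact OP.Fn_zero _
  rw [h3] at h
  omega
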